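/- arXiv:2501.06599 — 7 statements merged into one kernel-verified Lean document; each statement's English description precedes it below -/
import Mathlib

section
/- Let k=(k1,k2) and l=(l1,l2) be nonzero elements of ℕ₀² with k1 ≠ l1 and k2 ≠ l2. Then the quantity C(k,l) = −(1/(4·S_T·‖k‖²·‖l‖²))·[ (k×l)⁴/‖k+l‖² + (k×l)⁴/‖k−l‖² + (k×l̄)⁴/‖k+l̄‖² + (k×l̄)⁴/‖k−l̄‖² ] is well defined (all four denominators are nonzero), is strictly negative, and satisfies −min{‖k‖², ‖l‖²}/S_T ≤ C(k,l) < 0. -/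
/-- Area of the flat torus ℝ²/(2πℤ)². -/
noncomputable def STorus : ℝ := 4 * Real.pi ^ 2

/-- Cross product k×l = k1·l2 − k2·l1. -/
def cross (k l : ℤ × ℤ) : ℤ := k.1 * l.2 - k.2 * l.1

/-- Squared norm ‖k‖² = k1² + k2². -/
def nsq (k : ℤ × ℤ) : ℤ := k.1 ^ 2 + k.2 ^ 2

/-- Reflection l̄ = (l1, −l2). -/
def conjPt (l : ℤ × ℤ) : ℤ × ℤ := (l.1, -l.2)

/-- Embedding of ℕ₀² into ℤ². -/
def emb (k : ℕ × ℕ) : ℤ × ℤ := ((k.1 : ℤ), (k.2 : ℤ))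

/-- Sectional curvature C(k,l) of SDiff(𝕂) in the plane spanned by ξ_k, η_l. -/
noncomputable def Ccurv (k l : ℤ × ℤ) : ℝ :=
  -(1 / (4 * STorus * (nsq k : ℝ) * (nsq l : ℝ))) *
    ((cross k l : ℝ) ^ 4 / (nsq (k + l) : ℝ) +
     (cross k l : ℝ) ^ 4 / (nsq (k - l) : ℝ) +
     (cross k (conjPt l) : ℝ) ^ 4 / (nsq (k + conjPt l) : ℝ) +
     (cross k (conjPt l) : ℝ) ^ 4 / (nsq (k - conjPt l) : ℝ))

theorem term_bound_aux (X A B N : ℝ) (hN : 0 < N) (hA : 0 ≤ A) (hB : 0 ≤ B)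
    (h1 : X ^ 2 ≤ A * N) (h2 : X ^ 2 ≤ B * N) (h3 : X ^ 2 ≤ A * B) :
    X ^ 4 / N ≤ min A B * (A * B) := by
  rw [div_le_iff₀ hN]
  have h4 : X ^ 2 ≤ min A B * N := by
    rcases min_choice A B with h | h <;> rw [h] <;> assumption
  have h5 : 0 ≤ min A B * N := mul_nonneg (le_min hA hB) hN.le
  calc X ^ 4 = X ^ 2 * X ^ 2 := by ring
    _ ≤ (min A B * N) * (A * B) := mul_le_mul h4 h3 (sq_nonneg X) h5
    _ = _ := by ring

theorem sectional_curvature_klein_negative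
    (k l : ℕ × ℕ) (hk : k ≠ (0, 0)) (hl : l ≠ (0, 0))
    (h1 : k.1 ≠ l.1) (h2 : k.2 ≠ l.2) :
    (nsq (emb k + emb l) ≠ 0 ∧ nsq (emb k - emb l) ≠ 0 ∧
     nsq (emb k + conjPt (emb l)) ≠ 0 ∧ nsq (emb k - conjPt (emb l)) ≠ 0) ∧
    Ccurv (emb k) (emb l) < 0 ∧
    -(min ((nsq (emb k) : ℝ)) ((nsq (emb l) : ℝ)) / STorus) ≤ Ccurv (emb k) (emb l) := by
  obtain ⟨a, b⟩ := k
  obtain ⟨c, d⟩ := l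
  simp only [ne_eq, Prod.mk.injEq, not_and_or] at hk hl h1 h2
  have pos : ∀ x y : ℤ, (x ≠ 0 ∨ y ≠ 0) → 0 < x ^ 2 + y ^ 2 := by
    intro x y h
    rcases h with h | h <;> positivity
  have p1 : 0 < nsq (emb (a, b) + emb (c, d)) := pos _ _ (by simp [emb]; omega)
  have p2 : 0 < nsq (emb (a, b) - emb (c, d)) := pos _ _ (by simp [emb]; omega)
  have p3 : 0 < nsq (emb (a, b) + conjPt (emb (c, d))) :=
    pos _ _ (by simp [emb, conjPt]; omega)
  have p4 : 0 < nsq (emb (a, b) - conjPt (emb (c, d))) :=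
    pos _ _ (by simp [emb, conjPt]; omega)
  have pA : 0 < nsq (emb (a, b)) := pos _ _ (by simp [emb]; omega)
  have pB : 0 < nsq (emb (c, d)) := pos _ _ (by simp [emb]; omega)
  have hX : cross (emb (a, b)) (emb (c, d)) ≠ 0 ∨
      cross (emb (a, b)) (conjPt (emb (c, d))) ≠ 0 := by
    by_contra! hcon
    obtain ⟨e1, e2⟩ := hcon
    simp only [cross, emb, conjPt] at e1 e2
    have f1 : (a : ℤ) * d = 0 := by linarith
    have f2 : (b : ℤ) * c = 0 := by linarith
    rcases mul_eq_zero.mp f1 with h | h <;> rcases mul_eq_zero.mp f2 with h' | h' <;> omega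
  refine ⟨⟨p1.ne', p2.ne', p3.ne', p4.ne'⟩, ?_⟩
  have hS : 0 < STorus := by unfold STorus; positivity
  have key : ∀ X A B N : ℤ, 0 < N → 0 < A → 0 < B → X ^ 2 ≤ A * N → X ^ 2 ≤ B * N →
      X ^ 2 ≤ A * B → (X : ℝ) ^ 4 / (N : ℝ) ≤ min (A : ℝ) (B : ℝ) * ((A : ℝ) * (B : ℝ)) := by
    intro X A B N hN hA hB g1 g2 g3
    exact term_bound_aux _ _ _ _ (by exact_mod_cast hN) (by exact_mod_cast hA.le)
      (by exact_mod_cast hB.le) (by exact_mod_cast g1) (by exact_mod_cast g2)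
      (by exact_mod_cast g3)
  have cs : ∀ X Y Z : ℤ, Z = X ^ 2 + Y ^ 2 → X ^ 2 ≤ Z := by
    intro X Y Z h
    nlinarith [sq_nonneg Y]
  have t1 := key (cross (emb (a, b)) (emb (c, d))) _ _ _ p1 pA pB
    (cs _ (a * (a + c) + b * (b + d)) _ (by simp [nsq, cross, emb]; ring))
    (cs _ (c * (a + c) + d * (b + d)) _ (by simp [nsq, cross, emb]; ring))
    (cs _ (a * c + b * d) _ (by simp [nsq, cross, emb]; ring))
  have t2 := key (cross (emb (a, b)) (emb (c, d))) _ _ _ p2 pA pB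
    (cs _ (a * (a - c) + b * (b - d)) _ (by simp [nsq, cross, emb]; ring))
    (cs _ (c * (a - c) + d * (b - d)) _ (by simp [nsq, cross, emb]; ring))
    (cs _ (a * c + b * d) _ (by simp [nsq, cross, emb]; ring))
  have t3 := key (cross (emb (a, b)) (conjPt (emb (c, d)))) _ _ _ p3 pA pB
    (cs _ (a * (a + c) + b * (b - d)) _ (by simp [nsq, cross, emb, conjPt]; ring))
    (cs _ (c * (a + c) - d * (b - d)) _ (by simp [nsq, cross, emb, conjPt]; ring))
    (cs _ (a * c - b * d) _ (by simp [nsq, cross, emb, conjPt]; ring))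
  have t4 := key (cross (emb (a, b)) (conjPt (emb (c, d)))) _ _ _ p4 pA pB
    (cs _ (a * (a - c) + b * (b + d)) _ (by simp [nsq, cross, emb, conjPt]; ring))
    (cs _ (c * (a - c) - d * (b + d)) _ (by simp [nsq, cross, emb, conjPt]; ring))
    (cs _ (a * c - b * d) _ (by simp [nsq, cross, emb, conjPt]; ring))
  unfold Ccurv
  generalize nsq (emb (a, b) + emb (c, d)) = N1 at *
  generalize nsq (emb (a, b) - emb (c, d)) = N2 at *
  generalize nsq (emb (a, b) + conjPt (emb (c, d))) = N3 at *
  generalize nsq (emb (a, b) - conjPt (emb (c, d))) = N4 at *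
  generalize nsq (emb (a, b)) = A at *
  generalize nsq (emb (c, d)) = B at *
  generalize cross (emb (a, b)) (emb (c, d)) = X at *
  generalize cross (emb (a, b)) (conjPt (emb (c, d))) = Y at *
  have q1 : (0 : ℝ) < N1 := by exact_mod_cast p1
  have q2 : (0 : ℝ) < N2 := by exact_mod_cast p2
  have q3 : (0 : ℝ) < N3 := by exact_mod_cast p3
  have q4 : (0 : ℝ) < N4 := by exact_mod_cast p4
  have qA : (0 : ℝ) < A := by exact_mod_cast pA
  have qB : (0 : ℝ) < B := by exact_mod_cast pB
  have hD : 0 < 1 / (4 * STorus * (A : ℝ) * (B : ℝ)) := by positivity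
  constructor
  · rw [neg_mul, neg_lt_zero]
    apply mul_pos hD
    rcases hX with h | h
    · have hr : (X : ℝ) ≠ 0 := by exact_mod_cast h
      positivity
    · have hr : (Y : ℝ) ≠ 0 := by exact_mod_cast h
      positivity
  · rw [neg_mul, neg_le_neg_iff]
    have e : min (A : ℝ) (B : ℝ) / STorus = 1 / (4 * STorus * (A : ℝ) * (B : ℝ)) *
        (4 * (min (A : ℝ) (B : ℝ) * ((A : ℝ) * (B : ℝ)))) := by
      field_simp
    rw [e]
    apply mul_le_mul_of_nonneg_left _ hD.le
    linarith
end

section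
/- Fix a nonzero k = (k1,k2) ∈ ℕ₀² and write k = ‖k‖·(cos κ, sin κ) with κ ∈ [0, π/2]. Let (l_m)_{m∈ℕ} be a sequence of nonzero elements of ℕ₀² with (l_m)₁ ≠ k1 and (l_m)₂ ≠ k2 for all m, such that ‖l_m‖ → ∞ and l_m/‖l_m‖ → (cos λ, sin λ) for some λ ∈ [0, π/2]. Then lim_{m→∞} C(k, l_m) = −(‖k‖²/(2·S_T))·( sin⁴(λ − κ) + sin⁴(λ + κ) ). -/
/-- Norm ‖k‖. -/
noncomputable def nrm (k : ℤ × ℤ) : ℝ := Real.sqrt ((k.1 : ℝ) ^ 2 + (k.2 : ℝ) ^ 2)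

open Filter Topology in
theorem aux_term (a b c s : ℝ) (hcs : c ^ 2 + s ^ 2 = 1) (x y r : ℕ → ℝ)
    (hr : Tendsto r atTop atTop)
    (hx : Tendsto (fun m => x m / r m) atTop (𝓝 c))
    (hy : Tendsto (fun m => y m / r m) atTop (𝓝 s)) :
    Tendsto (fun m => (a * y m - b * x m) ^ 4 / ((a + x m) ^ 2 + (b + y m) ^ 2) / r m ^ 2)
      atTop (𝓝 ((a * s - b * c) ^ 4)) := by
  have ha : Tendsto (fun m => a / r m) atTop (𝓝 0) := hr.const_div_atTop a
  have hb : Tendsto (fun m => b / r m) atTop (𝓝 0) := hr.const_div_atTop b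
  have hnum := (((hy.const_mul a).sub (hx.const_mul b)).pow 4)
  have hden := ((ha.add hx).pow 2).add ((hb.add hy).pow 2)
  have h := hnum.div hden (by rw [zero_add, zero_add, hcs]; exact one_ne_zero)
  rw [zero_add, zero_add, hcs, div_one] at h
  refine h.congr' ?_
  filter_upwards [hr.eventually_gt_atTop 0] with m hm
  have e1 : a * (y m / r m) - b * (x m / r m) = (a * y m - b * x m) / r m := by ring
  have e2 : (a / r m + x m / r m) ^ 2 + (b / r m + y m / r m) ^ 2
      = ((a + x m) ^ 2 + (b + y m) ^ 2) / r m ^ 2 := by ring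
  simp only [Pi.div_apply]
  rw [e1, e2, div_pow, div_div_div_eq, div_div]
  rw [show (a * y m - b * x m) ^ 4 * r m ^ 2 = r m ^ 2 * (a * y m - b * x m) ^ 4 by ring,
    show r m ^ 4 * ((a + x m) ^ 2 + (b + y m) ^ 2)
      = r m ^ 2 * (((a + x m) ^ 2 + (b + y m) ^ 2) * r m ^ 2) by ring]
  exact mul_div_mul_left _ _ (by positivity)

theorem asymptotic_sectional_curvature_klein
    (k : ℕ × ℕ) (hk : k ≠ (0, 0)) (κ : ℝ) (hκ : κ ∈ Set.Icc 0 (Real.pi / 2))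
    (hkdir : ((k.1 : ℝ), (k.2 : ℝ)) = (nrm (emb k) * Real.cos κ, nrm (emb k) * Real.sin κ))
    (L : ℕ → ℕ × ℕ) (hL0 : ∀ m, L m ≠ (0, 0))
    (h1 : ∀ m, (L m).1 ≠ k.1) (h2 : ∀ m, (L m).2 ≠ k.2)
    (lam : ℝ) (hlam : lam ∈ Set.Icc 0 (Real.pi / 2))
    (hnorm : Filter.Tendsto (fun m => nrm (emb (L m))) Filter.atTop Filter.atTop)
    (hdir : Filter.Tendsto
      (fun m => (((L m).1 : ℝ) / nrm (emb (L m)), ((L m).2 : ℝ) / nrm (emb (L m))))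
      Filter.atTop (nhds (Real.cos lam, Real.sin lam))) :
    Filter.Tendsto (fun m => Ccurv (emb k) (emb (L m))) Filter.atTop
      (nhds (-((nsq (emb k) : ℝ) / (2 * STorus)) *
        (Real.sin (lam - κ) ^ 4 + Real.sin (lam + κ) ^ 4))) := by
  have hx := (continuous_fst.tendsto _).comp hdir
  have hy := (continuous_snd.tendsto _).comp hdir
  simp only [Function.comp_def] at hx hy
  have hx' : Filter.Tendsto (fun m => (-((L m).1 : ℝ)) / nrm (emb (L m))) Filter.atTop
      (nhds (-Real.cos lam)) := by simpa only [neg_div] using hx.neg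
  have hy' : Filter.Tendsto (fun m => (-((L m).2 : ℝ)) / nrm (emb (L m))) Filter.atTop
      (nhds (-Real.sin lam)) := by simpa only [neg_div] using hy.neg
  have hcs := Real.cos_sq_add_sin_sq lam
  have t1 := aux_term k.1 k.2 _ _ hcs _ _ _ hnorm hx hy
  have t2 := aux_term k.1 k.2 _ _ (by simp) _ _ _ hnorm hx' hy'
  have t3 := aux_term k.1 k.2 _ _ (by simp) _ _ _ hnorm hx hy'
  have t4 := aux_term k.1 k.2 _ _ (by simp) _ _ _ hnorm hx' hy
  have t := (((t1.add t2).add t3).add t4).const_mul (-(1 / (4 * STorus * (nsq (emb k) : ℝ))))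
  have hK : (nrm (emb k)) ^ 2 = (nsq (emb k) : ℝ) := by
    simp only [nrm, nsq]
    rw [Real.sq_sqrt (by positivity)]
    push_cast
    rfl
  have hR : ∀ m, (nsq (emb (L m)) : ℝ) = (nrm (emb (L m))) ^ 2 := by
    intro m
    simp only [nrm, nsq]
    rw [Real.sq_sqrt (by positivity)]
    push_cast
    rfl
  have hKpos : (nsq (emb k) : ℝ) ≠ 0 := by
    intro h0
    rw [← hK] at h0
    have h00 : nrm (emb k) = 0 := by simpa using h0
    rw [h00] at hkdir
    simp only [zero_mul, Prod.mk.injEq, Nat.cast_eq_zero] at hkdir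
    exact hk (Prod.ext hkdir.1 hkdir.2)
  have hS : STorus ≠ 0 := by
    have := Real.pi_pos
    unfold STorus
    positivity
  obtain ⟨hk1, hk2⟩ := Prod.mk.inj hkdir
  convert t using 1
  · funext m
    unfold Ccurv
    rw [hR m]
    generalize nrm (emb (L m)) = r
    generalize (nsq (emb k) : ℝ) = N
    simp only [nsq, cross, conjPt, emb, Prod.fst_add, Prod.snd_add, Prod.fst_sub, Prod.snd_sub]
    push_cast
    ring
  · congr 1
    rw [hk1, hk2, Real.sin_sub, Real.sin_add, ← hK]
    rw [← hK] at hKpos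
    have hn : nrm (emb k) ≠ 0 := fun h => hKpos (by rw [h]; ring)
    field_simp
    ring
end

section
/- Fix a nonzero k = (k1,k2) ∈ ℕ₀². For R > 0 let L_R(k) = { l ∈ ℕ₀² : 0 < ‖l‖ ≤ R, l1 ≠ k1, l2 ≠ k2 }. Then lim_{R→∞} (1/#L_R(k)) · Σ_{l ∈ L_R(k)} C(k,l) = −3·(k1² + k2²)/(8·S_T). (Equivalently, the normalized Ricci curvature of SDiff(𝕂) in the direction of the basis stream function ξ_k equals −3‖k‖²/(16·S_𝕂), where S_𝕂 = 2π² is the area of the Klein bottle.) -/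
/-- L_R(k) = { l ∈ ℕ₀² : 0 < ‖l‖ ≤ R, l1 ≠ k1, l2 ≠ k2 }. -/
def LR (k : ℕ × ℕ) (R : ℕ) : Finset (ℕ × ℕ) :=
  (Finset.range (R + 1) ×ˢ Finset.range (R + 1)).filter
    (fun l => 0 < l.1 ^ 2 + l.2 ^ 2 ∧ l.1 ^ 2 + l.2 ^ 2 ≤ R ^ 2 ∧
      l.1 ≠ k.1 ∧ l.2 ≠ k.2)

open MeasureTheory Filter Topology
open scoped Pointwise

noncomputable def Gp (α β a b : ℝ) : ℝ :=
  α * (a ^ 4 - 6 * a ^ 2 * b ^ 2 + b ^ 4) + β * (b ^ 4 - a ^ 4)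

noncomputable def Fd (α β δ a b : ℝ) : ℝ := Gp α β a b / (max (a ^ 2 + b ^ 2) δ) ^ 2

def qd : Set (Fin 2 → ℝ) := {x | 0 ≤ x 0 ∧ 0 ≤ x 1 ∧ x 0 ^ 2 + x 1 ^ 2 ≤ 1}

def QR (R : ℕ) : Finset (ℕ × ℕ) :=
  (Finset.range (R + 1) ×ˢ Finset.range (R + 1)).filter (fun l => l.1 ^ 2 + l.2 ^ 2 ≤ R ^ 2)

lemma qd_meas : MeasurableSet qd := by
  have h0 : IsClosed {x : Fin 2 → ℝ | 0 ≤ x 0} := isClosed_le (by fun_prop) (by fun_prop)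
  have h1 : IsClosed {x : Fin 2 → ℝ | 0 ≤ x 1} := isClosed_le (by fun_prop) (by fun_prop)
  have h2 : IsClosed {x : Fin 2 → ℝ | x 0 ^ 2 + x 1 ^ 2 ≤ 1} :=
    isClosed_le (by fun_prop) (by fun_prop)
  exact (h0.inter (h1.inter h2)).measurableSet

lemma Gp_polar (α β r t : ℝ) : Gp α β (r * Real.cos t) (r * Real.sin t)
    = r ^ 4 * (α * Real.cos (4 * t) - β * Real.cos (2 * t)) := by
  have h4 : Real.cos (4 * t) = 2 * (2 * Real.cos t ^ 2 - 1) ^ 2 - 1 := by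
    rw [show 4 * t = 2 * (2 * t) by ring, Real.cos_two_mul, Real.cos_two_mul]
  have hs : Real.sin t ^ 2 = 1 - Real.cos t ^ 2 := by
    rw [← Real.sin_sq_add_cos_sq t]; ring
  have hs4 : Real.sin t ^ 4 = (1 - Real.cos t ^ 2) ^ 2 := by
    rw [← hs]; ring
  unfold Gp
  rw [h4, Real.cos_two_mul]
  simp only [mul_pow]
  rw [hs4, hs]
  ring

lemma ang_zero (α β : ℝ) :
    ∫ t in Set.Ioo (-Real.pi) Real.pi,
      (if 0 ≤ Real.cos t ∧ 0 ≤ Real.sin t then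
        (α * Real.cos (4 * t) - β * Real.cos (2 * t)) else 0) = 0 := by
  have h1 : ∀ t ∈ Set.Ioo (-Real.pi) Real.pi,
      (if 0 ≤ Real.cos t ∧ 0 ≤ Real.sin t then
        (α * Real.cos (4 * t) - β * Real.cos (2 * t)) else 0)
      = (Set.Icc 0 (Real.pi / 2)).indicator
        (fun t => α * Real.cos (4 * t) - β * Real.cos (2 * t)) t := by
    intro t ht
    rw [Set.indicator_apply]
    congr 1
    apply propext
    constructor
    · rintro ⟨hc, hs⟩
      constructor
      · by_contra h
        push Not at h
        have := Real.sin_neg_of_neg_of_neg_pi_lt h ht.1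
        linarith
      · by_contra h
        push Not at h
        have := Real.cos_neg_of_pi_div_two_lt_of_lt h (by linarith [ht.2, Real.pi_pos])
        linarith
    · rintro ⟨h0, h1⟩
      exact ⟨Real.cos_nonneg_of_mem_Icc ⟨by linarith [Real.pi_pos], h1⟩,
        Real.sin_nonneg_of_nonneg_of_le_pi h0 ht.2.le⟩
  rw [setIntegral_congr_fun measurableSet_Ioo h1, setIntegral_indicator measurableSet_Icc]
  have h2 : Set.Ioo (-Real.pi) Real.pi ∩ Set.Icc 0 (Real.pi / 2) = Set.Icc 0 (Real.pi / 2) := by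
    apply Set.inter_eq_right.2
    intro t ht
    exact ⟨by linarith [ht.1, Real.pi_pos], by linarith [ht.2, Real.pi_pos]⟩
  rw [h2, integral_Icc_eq_integral_Ioc, ← intervalIntegral.integral_of_le (by positivity)]
  rw [intervalIntegral.integral_sub (by apply Continuous.intervalIntegrable; fun_prop)
    (by apply Continuous.intervalIntegrable; fun_prop)]
  rw [intervalIntegral.integral_const_mul, intervalIntegral.integral_const_mul,
    intervalIntegral.integral_comp_mul_left _ (by norm_num),
    intervalIntegral.integral_comp_mul_left _ (by norm_num)]
  simp only [integral_cos]
  rw [show 4 * (Real.pi / 2) = 2 * Real.pi by ring, show 2 * (Real.pi / 2) = Real.pi by ring]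
  simp

lemma int_zero (α β δ : ℝ) : ∫ x in qd, Fd α β δ (x 0) (x 1) = 0 := by
  classical
  set H : ℝ × ℝ → ℝ := fun p =>
    if 0 ≤ p.1 ∧ 0 ≤ p.2 ∧ p.1 ^ 2 + p.2 ^ 2 ≤ 1 then Fd α β δ p.1 p.2 else 0 with hH
  have hm := qd_meas
  rw [← integral_indicator hm]
  have h1 : (qd.indicator fun x : Fin 2 → ℝ => Fd α β δ (x 0) (x 1))
      = fun x => H (MeasurableEquiv.finTwoArrow x) := by
    ext x
    simp [Set.indicator_apply, hH, qd, MeasurableEquiv.finTwoArrow]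
  rw [h1, (volume_preserving_finTwoArrow ℝ).integral_comp' H, ← integral_comp_polarCoord_symm]
  have h2 : ∀ p ∈ polarCoord.target, p.1 • H (polarCoord.symm p) =
      (if p.1 ^ 2 ≤ 1 then p.1 * (p.1 ^ 4 / (max (p.1 ^ 2) δ) ^ 2) else 0) *
      (if 0 ≤ Real.cos p.2 ∧ 0 ≤ Real.sin p.2 then
        (α * Real.cos (4 * p.2) - β * Real.cos (2 * p.2)) else 0) := by
    rintro ⟨r, t⟩ ⟨hr, ht⟩
    simp only [Set.mem_Ioi] at hr
    have e : (r * Real.cos t) ^ 2 + (r * Real.sin t) ^ 2 = r ^ 2 := by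
      have := Real.sin_sq_add_cos_sq t
      linear_combination r ^ 2 * this
    simp only [hH, polarCoord_symm_apply, Fd, e, Gp_polar, mul_nonneg_iff_of_pos_left hr,
      smul_eq_mul]
    by_cases a : 0 ≤ Real.cos t <;> by_cases b : 0 ≤ Real.sin t <;> by_cases c : r ^ 2 ≤ 1 <;>
      simp only [a, b, c, and_true, and_false, if_true, if_false, mul_zero, zero_mul]
    ring
  rw [setIntegral_congr_fun (polarCoord.open_target.measurableSet) h2]
  rw [polarCoord_target, Measure.volume_eq_prod, setIntegral_prod_mul 
     (fun r : ℝ => if r ^ 2 ≤ 1 then r * (r ^ 4 / (max (r ^ 2) δ) ^ 2) else 0)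
     (fun t : ℝ => if 0 ≤ Real.cos t ∧ 0 ≤ Real.sin t then
        (α * Real.cos (4 * t) - β * Real.cos (2 * t)) else 0), ang_zero, mul_zero]

lemma qd_convex : Convex ℝ qd := by
  intro x hx y hy a b ha hb hab
  obtain ⟨x0, x1, hx⟩ := hx
  obtain ⟨y0, y1, hy⟩ := hy
  refine ⟨?_, ?_, ?_⟩
  · simp; positivity
  · simp; positivity
  · simp only [Pi.add_apply, Pi.smul_apply, smul_eq_mul]
    have hb' : b = 1 - a := by linarith
    subst hb'
    nlinarith [mul_nonneg ha hb, mul_nonneg (mul_nonneg ha hb) (sq_nonneg (x 0 - y 0)),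
      mul_nonneg (mul_nonneg ha hb) (sq_nonneg (x 1 - y 1))]

lemma riem (α β δ : ℝ) (hδ : 0 < δ) :
    Tendsto (fun n : ℕ => (∑ l ∈ QR n, Fd α β δ ((l.1 : ℝ) / n) ((l.2 : ℝ) / n)) / (n : ℝ) ^ 2)
      atTop (𝓝 0) := by
  have hm := qd_meas
  have hb : Bornology.IsBounded qd := by
    apply (Metric.isBounded_Icc (0 : Fin 2 → ℝ) 1).subset
    rintro x ⟨h0, h1, h2⟩
    constructor <;> intro i <;> fin_cases i <;> simp <;> nlinarith
  have hc : Continuous (fun x : Fin 2 → ℝ => Fd α β δ (x 0) (x 1)) := by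
    unfold Fd Gp
    apply Continuous.div (by fun_prop) (by fun_prop)
    intro x
    have : 0 < max (x 0 ^ 2 + x 1 ^ 2) δ := lt_max_of_lt_right hδ
    positivity
  have key := tendsto_tsum_div_pow_atTop_integral qd (fun x : Fin 2 → ℝ => Fd α β δ (x 0) (x 1))
    hc hb hm (qd_convex.addHaar_frontier volume)
  rw [int_zero] at key
  refine key.congr' ?_
  filter_upwards [eventually_gt_atTop 0] with n hn
  have : NeZero n := ⟨hn.ne'⟩
  have hnR : (0:ℝ) < n := by exact_mod_cast hn
  rw [Fintype.card_fin]
  congr 1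
  rw [← Finset.tsum_subtype]
  symm
  let ψ : (QR n) → ↑(qd ∩ (n : ℝ)⁻¹ • (Submodule.span ℤ (Set.range (Pi.basisFun ℝ (Fin 2))) : Set (Fin 2 → ℝ))) :=
    fun l => ⟨![(l.1.1 : ℝ) / n, (l.1.2 : ℝ) / n], by
      refine ⟨⟨by simp; positivity, by simp; positivity, ?_⟩, ?_⟩
      · have := (Finset.mem_filter.1 l.2).2
        simp only [Matrix.cons_val_zero, Matrix.cons_val_one]
        rw [div_pow, div_pow, ← add_div, div_le_one (by positivity)]
        exact_mod_cast this
      · refine (BoxIntegral.unitPartition.mem_smul_span_iff (n := n)).2 ?_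
        intro i
        fin_cases i
        · exact ⟨(l.1.1 : ℤ), by simp; field_simp⟩
        · exact ⟨(l.1.2 : ℤ), by simp; field_simp⟩⟩
  have hψ : Function.Bijective ψ := by
    constructor
    · rintro ⟨⟨a, b⟩, h⟩ ⟨⟨c, d⟩, h'⟩ e
      have e' := congrArg Subtype.val e
      have e0 := congrFun e' 0
      have e1 := congrFun e' 1
      simp only [ψ, Matrix.cons_val_zero, Matrix.cons_val_one] at e0 e1
      rw [div_left_inj' hnR.ne'] at e0 e1
      simp only [Subtype.mk.injEq, Prod.mk.injEq]
      exact ⟨by exact_mod_cast e0, by exact_mod_cast e1⟩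
    · rintro ⟨x, ⟨h0, h1, h2⟩, hx⟩
      have hx := (BoxIntegral.unitPartition.mem_smul_span_iff (n := n)).1 hx
      obtain ⟨a, ha⟩ := hx 0
      obtain ⟨b, hb⟩ := hx 1
      simp only [algebraMap_int_eq, eq_intCast] at ha hb
      have a0 : 0 ≤ a := by
        have : (0:ℝ) ≤ a := by rw [ha]; positivity
        exact_mod_cast this
      have b0 : 0 ≤ b := by
        have : (0:ℝ) ≤ b := by rw [hb]; positivity
        exact_mod_cast this
      lift a to ℕ using a0
      lift b to ℕ using b0
      have h3 : (a:ℝ) ^ 2 + (b:ℝ) ^ 2 ≤ (n:ℝ) ^ 2 := by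
        have ha' : (a:ℝ) = n * x 0 := by exact_mod_cast ha
        have hb' : (b:ℝ) = n * x 1 := by exact_mod_cast hb
        rw [ha', hb']
        nlinarith [sq_nonneg (n:ℝ)]
      have h4 : a ^ 2 + b ^ 2 ≤ n ^ 2 := by exact_mod_cast h3
      refine ⟨⟨(a, b), ?_⟩, ?_⟩
      · simp only [QR, Finset.mem_filter, Finset.mem_product, Finset.mem_range]
        refine ⟨⟨?_, ?_⟩, h4⟩ <;> nlinarith
      · apply Subtype.ext
        funext i
        fin_cases i
        · simp [ψ]; rw [div_eq_iff hnR.ne', mul_comm]; exact_mod_cast ha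
        · simp [ψ]; rw [div_eq_iff hnR.ne', mul_comm]; exact_mod_cast hb
  exact (Equiv.ofBijective ψ hψ).tsum_eq (fun x => Fd α β δ (x.1 0) (x.1 1))

noncomputable def hh (α β : ℝ) (l : ℕ × ℕ) : ℝ :=
  Gp α β l.1 l.2 / ((l.1 : ℝ) ^ 2 + (l.2 : ℝ) ^ 2) ^ 2

lemma Gp_bound (α β a b : ℝ) : |Gp α β a b| ≤ (|α| + |β|) * (a ^ 2 + b ^ 2) ^ 2 := by
  unfold Gp
  have h1 : |a ^ 4 - 6 * a ^ 2 * b ^ 2 + b ^ 4| ≤ (a ^ 2 + b ^ 2) ^ 2 := by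
    rw [abs_le]
    constructor <;> nlinarith [sq_nonneg (a ^ 2 - b ^ 2), sq_nonneg (a * b)]
  have h2 : |b ^ 4 - a ^ 4| ≤ (a ^ 2 + b ^ 2) ^ 2 := by
    rw [abs_le]
    constructor <;> nlinarith [sq_nonneg (a ^ 2), sq_nonneg (b ^ 2), sq_nonneg (a * b)]
  calc _ ≤ |α * (a ^ 4 - 6 * a ^ 2 * b ^ 2 + b ^ 4)| + |β * (b ^ 4 - a ^ 4)| := abs_add_le _ _
    _ = |α| * |a ^ 4 - 6 * a ^ 2 * b ^ 2 + b ^ 4| + |β| * |b ^ 4 - a ^ 4| := by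
        rw [abs_mul, abs_mul]
    _ ≤ |α| * (a ^ 2 + b ^ 2) ^ 2 + |β| * (a ^ 2 + b ^ 2) ^ 2 := by gcongr
    _ = _ := by ring

lemma hh_bound (α β : ℝ) (l : ℕ × ℕ) : |hh α β l| ≤ |α| + |β| := by
  unfold hh
  rw [abs_div, abs_of_nonneg (by positivity : (0:ℝ) ≤ ((l.1 : ℝ) ^ 2 + (l.2 : ℝ) ^ 2) ^ 2)]
  exact div_le_of_le_mul₀ (by positivity) (by positivity) (Gp_bound _ _ _ _)

lemma Fd_bound (α β δ a b : ℝ) : |Fd α β δ a b| ≤ |α| + |β| := by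
  unfold Fd
  rw [abs_div, abs_of_nonneg (by positivity : (0:ℝ) ≤ (max (a ^ 2 + b ^ 2) δ) ^ 2)]
  apply div_le_of_le_mul₀ (by positivity) (by positivity)
  refine (Gp_bound _ _ _ _).trans ?_
  gcongr
  exact le_max_left _ _

lemma Fd_eq (α β δ : ℝ) (n : ℕ) (hn : 0 < n) (l : ℕ × ℕ)
    (h : δ * (n : ℝ) ^ 2 < (l.1 : ℝ) ^ 2 + (l.2 : ℝ) ^ 2) :
    Fd α β δ ((l.1 : ℝ) / n) ((l.2 : ℝ) / n) = hh α β l := by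
  have hnR : (0:ℝ) < n := by exact_mod_cast hn
  have e : ((l.1 : ℝ) / n) ^ 2 + ((l.2 : ℝ) / n) ^ 2
      = ((l.1 : ℝ) ^ 2 + (l.2 : ℝ) ^ 2) / (n : ℝ) ^ 2 := by
    rw [div_pow, div_pow, add_div]
  unfold Fd hh
  rw [e, max_eq_left (by rw [le_div_iff₀ (by positivity)]; exact h.le)]
  have g : Gp α β ((l.1 : ℝ) / n) ((l.2 : ℝ) / n) = Gp α β l.1 l.2 / (n : ℝ) ^ 4 := by
    unfold Gp
    field_simp
  rw [g, div_pow, ← pow_mul, div_div_div_cancel_right₀ (by positivity)]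

lemma small_card (d : ℝ) (hd : 0 < d) (n : ℕ) (hn : 1 ≤ d * n) :
    (((QR n).filter (fun l => (l.1 : ℝ) ^ 2 + (l.2 : ℝ) ^ 2 ≤ d ^ 2 * (n : ℝ) ^ 2)).card : ℝ)
      ≤ 4 * (d ^ 2 * (n : ℝ) ^ 2) := by
  set m := ⌊d * n⌋₊ with hm
  have hsub : (QR n).filter (fun l => (l.1 : ℝ) ^ 2 + (l.2 : ℝ) ^ 2 ≤ d ^ 2 * (n : ℝ) ^ 2)
      ⊆ Finset.range (m + 1) ×ˢ Finset.range (m + 1) := by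
    intro l hl
    have h := (Finset.mem_filter.1 hl).2
    simp only [Finset.mem_product, Finset.mem_range, Nat.lt_succ_iff]
    constructor <;> apply Nat.le_floor
    · exact abs_le_of_sq_le_sq' (by nlinarith [sq_nonneg (l.2 : ℝ)]) (by linarith) |>.2
    · exact abs_le_of_sq_le_sq' (by nlinarith [sq_nonneg (l.1 : ℝ)]) (by linarith) |>.2
  have h1 := Finset.card_le_card hsub
  rw [Finset.card_product, Finset.card_range] at h1
  have h2 : (m : ℝ) ≤ d * n := Nat.floor_le (by linarith)
  calc _ ≤ (((m + 1) * (m + 1) : ℕ) : ℝ) := by exact_mod_cast h1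
    _ = ((m : ℝ) + 1) * (m + 1) := by push_cast; ring
    _ ≤ (2 * (d * n)) * (2 * (d * n)) := by
        gcongr <;> linarith
    _ = _ := by ring

lemma lemA (α β : ℝ) :
    Tendsto (fun n : ℕ => (∑ l ∈ QR n, hh α β l) / (n : ℝ) ^ 2) atTop (𝓝 0) := by
  rw [Metric.tendsto_atTop']
  intro ε hε
  set C := |α| + |β| with hC
  have hC0 : 0 ≤ C := by positivity
  set d := Real.sqrt (ε / (16 * (C + 1))) with hd
  have hd0 : 0 < d := Real.sqrt_pos.2 (by positivity)
  have hd2 : d ^ 2 = ε / (16 * (C + 1)) := Real.sq_sqrt (by positivity)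
  obtain ⟨N, hN⟩ := (Metric.tendsto_atTop'.1 (riem α β (d ^ 2) (by positivity))) (ε / 2)
    (by positivity)
  obtain ⟨N', hN'⟩ := exists_nat_gt (1 / d)
  refine ⟨max N N', fun n hn => ?_⟩
  have hn1 : N < n := lt_of_le_of_lt (le_max_left _ _) hn
  have hn2 : N' < n := lt_of_le_of_lt (le_max_right _ _) hn
  have hn0 : 0 < n := by omega
  have hnR : (0:ℝ) < n := by exact_mod_cast hn0
  have h1 : 1 ≤ d * n := by
    have : 1 / d < n := hN'.trans (by exact_mod_cast hn2)
    rw [div_lt_iff₀ hd0] at this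
    linarith
  have h2 := hN n hn1
  rw [Real.dist_eq, sub_zero] at h2 ⊢
  have h3 : |∑ l ∈ QR n, hh α β l - ∑ l ∈ QR n, Fd α β (d ^ 2) ((l.1 : ℝ) / n) ((l.2 : ℝ) / n)|
      ≤ 2 * C * (4 * (d ^ 2 * (n : ℝ) ^ 2)) := by
    rw [← Finset.sum_sub_distrib]
    calc _ ≤ ∑ l ∈ QR n, |hh α β l - Fd α β (d ^ 2) ((l.1 : ℝ) / n) ((l.2 : ℝ) / n)| :=
          Finset.abs_sum_le_sum_abs _ _
      _ ≤ ∑ l ∈ QR n, if (l.1 : ℝ) ^ 2 + (l.2 : ℝ) ^ 2 ≤ d ^ 2 * (n : ℝ) ^ 2 then 2 * C else 0 := by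
          apply Finset.sum_le_sum
          intro l _
          split_ifs with h
          · have := abs_sub (hh α β l) (Fd α β (d ^ 2) ((l.1 : ℝ) / n) ((l.2 : ℝ) / n))
            linarith [hh_bound α β l, Fd_bound α β (d ^ 2) ((l.1 : ℝ) / n) ((l.2 : ℝ) / n)]
          · rw [Fd_eq α β (d ^ 2) n hn0 l (not_le.1 h)]; simp
      _ = ((QR n).filter (fun l =>
            (l.1 : ℝ) ^ 2 + (l.2 : ℝ) ^ 2 ≤ d ^ 2 * (n : ℝ) ^ 2)).card * (2 * C) := by
          rw [← Finset.sum_filter, Finset.sum_const, nsmul_eq_mul]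
      _ ≤ (4 * (d ^ 2 * (n : ℝ) ^ 2)) * (2 * C) := by
          gcongr
          exact small_card d hd0 n h1
      _ = _ := by ring
  have hn2 : (0:ℝ) < (n:ℝ) ^ 2 := by positivity
  rw [abs_div, abs_of_pos hn2, div_lt_iff₀ hn2] at h2 ⊢
  have h4 := abs_sub_abs_le_abs_sub (∑ l ∈ QR n, hh α β l)
    (∑ l ∈ QR n, Fd α β (d ^ 2) ((l.1 : ℝ) / n) ((l.2 : ℝ) / n))
  have h5 : 2 * C * (4 * (d ^ 2 * (n : ℝ) ^ 2)) ≤ ε / 2 * (n:ℝ) ^ 2 := by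
    rw [hd2]
    have : C / (C + 1) ≤ 1 := by rw [div_le_one (by positivity)]; linarith
    calc _ = ε / 2 * (n:ℝ) ^ 2 * (C / (C + 1)) := by field_simp; ring
      _ ≤ ε / 2 * (n:ℝ) ^ 2 * 1 := by gcongr
      _ = _ := by ring
  linarith

lemma card_lower (k : ℕ × ℕ) : ∀ᶠ R : ℕ in atTop, (R : ℝ) ^ 2 ≤ 36 * ((LR k R).card : ℝ) := by
  filter_upwards [eventually_ge_atTop (6 * (k.1 + k.2 + 1))] with R hR
  set m := R / 2 with hm
  have hsub : Finset.Ioc k.1 m ×ˢ Finset.Ioc k.2 m ⊆ LR k R := by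
    intro l hl
    simp only [Finset.mem_product, Finset.mem_Ioc] at hl
    obtain ⟨⟨h1, h2⟩, h3, h4⟩ := hl
    have h5 : 2 * l.1 ≤ R := by omega
    have h6 : 2 * l.2 ≤ R := by omega
    simp only [LR, Finset.mem_filter, Finset.mem_product, Finset.mem_range]
    refine ⟨⟨by omega, by omega⟩, ?_, by nlinarith, by omega, by omega⟩
    have : 0 < l.1 := by omega
    positivity
  have h1 := Finset.card_le_card hsub
  rw [Finset.card_product, Nat.card_Ioc, Nat.card_Ioc] at h1
  have h2 : R ≤ 6 * (m - k.1) := by omega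
  have h3 : R ≤ 6 * (m - k.2) := by omega
  have h4 : R ^ 2 ≤ 36 * (LR k R).card := by nlinarith [Nat.mul_le_mul h2 h3]
  exact_mod_cast h4

lemma LR_sub (k : ℕ × ℕ) (R : ℕ) : LR k R ⊆ QR R := by
  intro l hl
  simp only [LR, QR, Finset.mem_filter] at *
  tauto

lemma sdiff_card (k : ℕ × ℕ) (R : ℕ) : (QR R \ LR k R).card ≤ 2 * R + 3 := by
  have hsub : QR R \ LR k R ⊆ ({k.1} ×ˢ Finset.range (R + 1)) ∪
      ((Finset.range (R + 1) ×ˢ {k.2}) ∪ {(0, 0)}) := by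
    rintro ⟨a, b⟩ hl
    simp only [LR, QR, Finset.mem_filter, Finset.mem_sdiff, Finset.mem_product, Finset.mem_range,
      Finset.mem_union, Finset.mem_singleton, Prod.mk.injEq] at *
    obtain ⟨⟨h1, h2⟩, h3⟩ := hl
    by_cases ha : a = k.1
    · left; exact ⟨ha, h1.2⟩
    by_cases hb : b = k.2
    · right; left; exact ⟨h1.1, hb⟩
    right; right
    by_contra h
    apply h3
    refine ⟨h1, ?_, h2, ha, hb⟩
    by_contra h0
    apply h
    constructor <;> by_contra h' <;> apply h0 <;> positivity
  refine (Finset.card_le_card hsub).trans ?_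
  refine (Finset.card_union_le _ _).trans ?_
  have := Finset.card_union_le (Finset.range (R + 1) ×ˢ {k.2}) {((0, 0) : ℕ × ℕ)}
  simp only [Finset.card_product, Finset.card_singleton, Finset.card_range] at *
  omega

lemma lemB (k : ℕ × ℕ) (α β : ℝ) :
    Tendsto (fun R : ℕ => (1 / ((LR k R).card : ℝ)) * ∑ l ∈ LR k R, hh α β l) atTop (𝓝 0) := by
  have hA := (lemA α β).abs
  rw [abs_zero] at hA
  have hI : Tendsto (fun n : ℕ => ((n : ℝ))⁻¹) atTop (𝓝 0) := tendsto_inv_atTop_nhds_zero_nat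
  have hB : Tendsto (fun n : ℕ => 36 * (|(∑ l ∈ QR n, hh α β l) / (n : ℝ) ^ 2| +
      (|α| + |β|) * (2 * (n : ℝ)⁻¹ + 3 * ((n : ℝ)⁻¹ * (n : ℝ)⁻¹)))) atTop (𝓝 0) := by
    have := (hA.add (((hI.const_mul 2).add ((hI.mul hI).const_mul 3)).const_mul
      (|α| + |β|))).const_mul 36
    simpa using this
  refine squeeze_zero_norm' ?_ hB
  filter_upwards [card_lower k, eventually_gt_atTop 0] with n hn hn0
  have hnR : (0:ℝ) < n := by exact_mod_cast hn0
  have hc : (0:ℝ) < (LR k n).card := by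
    have : (0:ℝ) < (n:ℝ) ^ 2 := by positivity
    linarith
  have h1 : |∑ l ∈ LR k n, hh α β l| ≤ |∑ l ∈ QR n, hh α β l| + (|α| + |β|) * (2 * n + 3) := by
    have e := Finset.sum_sdiff (f := hh α β) (LR_sub k n)
    have h2 : |∑ l ∈ QR n \ LR k n, hh α β l| ≤ (|α| + |β|) * (2 * n + 3) := by
      calc _ ≤ ∑ l ∈ QR n \ LR k n, |hh α β l| := Finset.abs_sum_le_sum_abs _ _
        _ ≤ ∑ l ∈ QR n \ LR k n, (|α| + |β|) := Finset.sum_le_sum fun l _ => hh_bound α β l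
        _ = (|α| + |β|) * ((QR n \ LR k n).card : ℝ) := by
          rw [Finset.sum_const, nsmul_eq_mul, mul_comm]
        _ ≤ _ := by
          gcongr
          exact_mod_cast sdiff_card k n
    have h3 : ∑ l ∈ LR k n, hh α β l = ∑ l ∈ QR n, hh α β l - ∑ l ∈ QR n \ LR k n, hh α β l := by
      linarith
    rw [h3]
    exact (abs_sub _ _).trans (by linarith)
  rw [Real.norm_eq_abs, abs_mul, abs_of_pos (by positivity : 0 < 1 / ((LR k n).card : ℝ))]
  calc _ ≤ (36 / (n:ℝ) ^ 2) * (|∑ l ∈ QR n, hh α β l| + (|α| + |β|) * (2 * n + 3)) := by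
        refine mul_le_mul ?_ h1 (abs_nonneg _) (by positivity)
        rw [div_le_div_iff₀ hc (by positivity)]
        linarith
    _ = _ := by
        rw [abs_div, abs_of_pos (by positivity : (0:ℝ) < (n:ℝ) ^ 2)]
        field_simp

lemma lemE (k : ℕ × ℕ) (e : ℕ × ℕ → ℝ)
    (he : ∀ ε > 0, ∃ M : ℕ, ∀ l : ℕ × ℕ, M ≤ l.1 ^ 2 + l.2 ^ 2 → |e l| ≤ ε) :
    Tendsto (fun R : ℕ => (1 / ((LR k R).card : ℝ)) * ∑ l ∈ LR k R, e l) atTop (𝓝 0) := by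
  have hI : Tendsto (fun n : ℕ => ((n : ℝ))⁻¹) atTop (𝓝 0) := tendsto_inv_atTop_nhds_zero_nat
  rw [Metric.tendsto_nhds]
  intro ε hε
  obtain ⟨M, hM⟩ := he (ε / 2) (by positivity)
  set S := ∑ l ∈ Finset.range (M + 1) ×ˢ Finset.range (M + 1), |e l| with hS
  have hS0 : 0 ≤ S := Finset.sum_nonneg fun _ _ => abs_nonneg _
  have h1 : Tendsto (fun n : ℕ => 36 * S * ((n : ℝ)⁻¹ * (n : ℝ)⁻¹)) atTop (𝓝 0) := by
    simpa using (hI.mul hI).const_mul (36 * S)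
  filter_upwards [card_lower k, eventually_gt_atTop 0,
    h1.eventually_lt_const (show 0 < ε / 2 by positivity)] with n hn hn0 h2
  have hnR : (0:ℝ) < n := by exact_mod_cast hn0
  have hc : (0:ℝ) < (LR k n).card := by
    have : (0:ℝ) < (n:ℝ) ^ 2 := by positivity
    linarith
  have h3 : |∑ l ∈ LR k n, e l| ≤ S + (LR k n).card * (ε / 2) := by
    calc _ ≤ ∑ l ∈ LR k n, |e l| := Finset.abs_sum_le_sum_abs _ _
      _ ≤ ∑ l ∈ LR k n, ((if l ∈ Finset.range (M + 1) ×ˢ Finset.range (M + 1) then |e l| else 0)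
            + ε / 2) := by
          apply Finset.sum_le_sum
          intro l _
          split_ifs with h
          · linarith
          · rw [zero_add]
            apply hM
            simp only [Finset.mem_product, Finset.mem_range, not_and_or, not_lt] at h
            rcases h with h | h <;> nlinarith
      _ ≤ _ := by
          rw [Finset.sum_add_distrib, Finset.sum_const, nsmul_eq_mul, ← Finset.sum_filter]
          gcongr
          apply Finset.sum_le_sum_of_subset_of_nonneg
          · intro l hl
            exact (Finset.mem_filter.1 hl).2
          · intros; positivity
  rw [Real.dist_eq, sub_zero, abs_mul, abs_of_pos (by positivity : 0 < 1 / ((LR k n).card : ℝ))]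
  calc _ ≤ 1 / ((LR k n).card : ℝ) * (S + (LR k n).card * (ε / 2)) := by gcongr
    _ = 1 / ((LR k n).card : ℝ) * S + ε / 2 := by field_simp
    _ ≤ 36 / (n:ℝ) ^ 2 * S + ε / 2 := by
        gcongr 1
        gcongr 1
        rw [div_le_div_iff₀ hc (by positivity)]
        linarith
    _ = 36 * S * ((n : ℝ)⁻¹ * (n : ℝ)⁻¹) + ε / 2 := by field_simp
    _ < ε := by linarith

lemma term_bound (n Q η c s : ℝ) (hn : 0 < n) (hQ : 0 ≤ Q) (hη : 0 < η) (hη1 : η ≤ 1)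
    (h : 16 * Q ≤ η ^ 2 * n) (hc : c ^ 2 ≤ Q * n) (hs : s ^ 2 ≤ Q * n) :
    |c ^ 4 / (n * (n + 2 * s + Q)) - c ^ 4 / n ^ 2| ≤ 2 * Q ^ 2 * η := by
  have hs1 : |s| ≤ η * n / 4 := by
    apply abs_le_of_sq_le_sq _ (by positivity)
    nlinarith
  have hs2 := abs_le.1 hs1
  have hηn : η * n ≤ n := by nlinarith
  have hQ1 : Q ≤ η * n / 16 := by nlinarith [mul_nonneg hη.le hn.le]
  set m := n + 2 * s + Q with hm
  have hmn : n ≤ 2 * m := by linarith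
  have hm0 : 0 < m := by linarith
  have hd : |n - m| ≤ η * n := by
    rw [abs_le]; constructor <;> linarith
  have hc4 : c ^ 4 ≤ Q ^ 2 * n ^ 2 := by
    calc c ^ 4 = (c ^ 2) ^ 2 := by ring
      _ ≤ (Q * n) ^ 2 := by gcongr
      _ = _ := by ring
  have e : c ^ 4 / (n * m) - c ^ 4 / n ^ 2 = c ^ 4 * (n - m) / (n ^ 2 * m) := by
    field_simp
  rw [e, abs_div, abs_mul, abs_of_nonneg (by positivity : 0 ≤ c ^ 4),
    abs_of_pos (by positivity : 0 < n ^ 2 * m), div_le_iff₀ (by positivity)]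
  calc c ^ 4 * |n - m| ≤ (Q ^ 2 * n ^ 2) * (η * n) := by gcongr
    _ ≤ (Q ^ 2 * n ^ 2) * (η * (2 * m)) := by gcongr
    _ = _ := by ring

theorem ricci_curvature_klein (k : ℕ × ℕ) (hk : k ≠ (0, 0)) :
    Filter.Tendsto
      (fun R : ℕ => (1 / ((LR k R).card : ℝ)) * ∑ l ∈ LR k R, Ccurv (emb k) (emb l))
      Filter.atTop
      (nhds (-(3 * ((k.1 : ℝ) ^ 2 + (k.2 : ℝ) ^ 2)) / (8 * STorus))) := by
  obtain ⟨p, q⟩ := k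
  simp only
  have hS : 0 < STorus := by unfold STorus; positivity
  set Q : ℝ := (p : ℝ) ^ 2 + (q : ℝ) ^ 2 with hQd
  have hQ : 0 < Q := by
    rcases Nat.eq_zero_or_pos p with h | h
    · rcases Nat.eq_zero_or_pos q with h' | h'
      · simp [h, h'] at hk
      · positivity
    · positivity
  set α : ℝ := ((p : ℝ) ^ 4 + (q : ℝ) ^ 4 - 6 * (p : ℝ) ^ 2 * (q : ℝ) ^ 2) / 4 with hα
  set β : ℝ := (p : ℝ) ^ 4 - (q : ℝ) ^ 4 with hβ
  set T : ℝ := -(3 * Q) / (8 * STorus) with hT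
  set e : ℕ × ℕ → ℝ := fun l =>
    Ccurv (emb (p, q)) (emb l) - T + 1 / (2 * STorus * Q) * hh α β l with he
  have hE : ∀ ε > 0, ∃ M : ℕ, ∀ l : ℕ × ℕ, M ≤ l.1 ^ 2 + l.2 ^ 2 → |e l| ≤ ε := by
    intro ε hε
    set η : ℝ := min 1 (ε * STorus / (2 * Q)) with hη
    have hη0 : 0 < η := lt_min one_pos (by positivity)
    have hη1 : η ≤ 1 := min_le_left _ _
    have hη2 : η ≤ ε * STorus / (2 * Q) := min_le_right _ _
    obtain ⟨M, hM⟩ := exists_nat_gt (16 * Q / η ^ 2)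
    refine ⟨M, ?_⟩
    rintro ⟨a, b⟩ hl
    simp only at hl
    set n : ℝ := (a : ℝ) ^ 2 + (b : ℝ) ^ 2 with hn
    have hMn : (M : ℝ) ≤ n := by rw [hn]; exact_mod_cast hl
    have h16 : 16 * Q ≤ η ^ 2 * n := by
      have : 16 * Q / η ^ 2 < n := hM.trans_le hMn
      rw [div_lt_iff₀ (by positivity)] at this
      linarith
    have hn0 : 0 < n := lt_of_lt_of_le (by positivity) (hM.le.trans hMn)
    set c : ℝ := (p : ℝ) * b - q * a with hc
    set c' : ℝ := (p : ℝ) * b + q * a with hc'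
    set s : ℝ := (p : ℝ) * a + q * b with hs
    set s' : ℝ := (p : ℝ) * a - q * b with hs'
    have hcs : c ^ 2 + s ^ 2 = Q * n := by rw [hc, hs, hQd, hn]; ring
    have hcs' : c' ^ 2 + s' ^ 2 = Q * n := by rw [hc', hs', hQd, hn]; ring
    have hc1 : c ^ 2 ≤ Q * n := by linarith [sq_nonneg s]
    have hs1 : s ^ 2 ≤ Q * n := by linarith [sq_nonneg c]
    have hc2 : c' ^ 2 ≤ Q * n := by linarith [sq_nonneg s']
    have hs2 : s' ^ 2 ≤ Q * n := by linarith [sq_nonneg c']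
    have t1 := term_bound n Q η c s hn0 hQ.le hη0 hη1 h16 hc1 hs1
    have t2 := term_bound n Q η c (-s) hn0 hQ.le hη0 hη1 h16 hc1 (by rwa [neg_sq])
    have t3 := term_bound n Q η c' s' hn0 hQ.le hη0 hη1 h16 hc2 hs2
    have t4 := term_bound n Q η c' (-s') hn0 hQ.le hη0 hη1 h16 hc2 (by rwa [neg_sq])
    have hCc : Ccurv (emb (p, q)) (emb (a, b)) = -(1 / (4 * STorus * Q)) *
        (c ^ 4 / (n * (n + 2 * s + Q)) + c ^ 4 / (n * (n + 2 * (-s) + Q)) +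
         c' ^ 4 / (n * (n + 2 * s' + Q)) + c' ^ 4 / (n * (n + 2 * (-s') + Q))) := by
      have e1 : ((cross (emb (p, q)) (emb (a, b)) : ℤ) : ℝ) = c := by
        simp [cross, emb, hc]
      have e2 : ((cross (emb (p, q)) (conjPt (emb (a, b))) : ℤ) : ℝ) = -c' := by
        simp [cross, emb, conjPt, hc']; ring
      have e3 : ((nsq (emb (p, q)) : ℤ) : ℝ) = Q := by simp [nsq, emb, hQd]
      have e4 : ((nsq (emb (a, b)) : ℤ) : ℝ) = n := by simp [nsq, emb, hn]
      have e5 : ((nsq (emb (p, q) + emb (a, b)) : ℤ) : ℝ) = n + 2 * s + Q := by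
        simp [nsq, emb, hn, hs, hQd]; ring
      have e6 : ((nsq (emb (p, q) - emb (a, b)) : ℤ) : ℝ) = n + 2 * (-s) + Q := by
        simp [nsq, emb, hn, hs, hQd]; ring
      have e7 : ((nsq (emb (p, q) + conjPt (emb (a, b))) : ℤ) : ℝ) = n + 2 * s' + Q := by
        simp [nsq, emb, conjPt, hn, hs', hQd]; ring
      have e8 : ((nsq (emb (p, q) - conjPt (emb (a, b))) : ℤ) : ℝ) = n + 2 * (-s') + Q := by
        simp [nsq, emb, conjPt, hn, hs', hQd]; ring
      unfold Ccurv
      rw [e1, e2, e3, e4, e5, e6, e7, e8, show (-c') ^ 4 = c' ^ 4 by ring]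
      simp only [div_eq_mul_inv, mul_inv]
      ring
    have hmain : T - 1 / (2 * STorus * Q) * hh α β (a, b)
        = -(1 / (4 * STorus * Q)) * (2 * (c ^ 4 / n ^ 2) + 2 * (c' ^ 4 / n ^ 2)) := by
      have hN : c ^ 4 + c' ^ 4 = 3 / 4 * Q ^ 2 * n ^ 2 + Gp α β a b := by
        rw [hc, hc', hα, hβ, hQd, hn]; unfold Gp; ring
      have hG : Gp α β a b = c ^ 4 + c' ^ 4 - 3 / 4 * Q ^ 2 * n ^ 2 := by linarith
      unfold hh
      simp only
      rw [← hn, hG, hT]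
      field_simp
      ring
    have hee : e (a, b) = -(1 / (4 * STorus * Q)) *
        ((c ^ 4 / (n * (n + 2 * s + Q)) - c ^ 4 / n ^ 2) +
         (c ^ 4 / (n * (n + 2 * (-s) + Q)) - c ^ 4 / n ^ 2) +
         (c' ^ 4 / (n * (n + 2 * s' + Q)) - c' ^ 4 / n ^ 2) +
         (c' ^ 4 / (n * (n + 2 * (-s') + Q)) - c' ^ 4 / n ^ 2)) := by
      have : e (a, b) = Ccurv (emb (p, q)) (emb (a, b))
          - (T - 1 / (2 * STorus * Q) * hh α β (a, b)) := by
        simp only [he]; ring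
      rw [this, hCc, hmain]
      ring
    rw [hee, abs_mul, abs_neg, abs_of_pos (by positivity : 0 < 1 / (4 * STorus * Q))]
    rw [abs_le] at t1 t2 t3 t4
    calc _ ≤ 1 / (4 * STorus * Q) * (8 * Q ^ 2 * η) := by
          gcongr
          rw [abs_le]
          constructor <;> linarith [t1.1, t2.1, t3.1, t4.1, t1.2, t2.2, t3.2, t4.2]
      _ = 2 * Q / STorus * η := by field_simp; ring
      _ ≤ 2 * Q / STorus * (ε * STorus / (2 * Q)) := by gcongr
      _ = ε := by field_simp
  have hfin := ((lemE (p, q) e hE).sub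
    ((lemB (p, q) α β).const_mul (1 / (2 * STorus * Q)))).add_const T
  rw [mul_zero, sub_zero, zero_add] at hfin
  refine hfin.congr' ?_
  filter_upwards [card_lower (p, q), eventually_gt_atTop 0] with n hn hn0
  have hnR : (0:ℝ) < n := by exact_mod_cast hn0
  have hc : (0:ℝ) < (LR (p, q) n).card := by
    have : (0:ℝ) < (n:ℝ) ^ 2 := by positivity
    linarith
  have h1 : ∑ l ∈ LR (p, q) n, Ccurv (emb (p, q)) (emb l) = ∑ l ∈ LR (p, q) n, e l
      - 1 / (2 * STorus * Q) * ∑ l ∈ LR (p, q) n, hh α β l + (LR (p, q) n).card * T := by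
    rw [Finset.mul_sum, ← Finset.sum_sub_distrib, ← nsmul_eq_mul, ← Finset.sum_const,
      ← Finset.sum_add_distrib]
    apply Finset.sum_congr rfl
    intro l _
    simp only [he]
    ring
  rw [h1]
  field_simp
end

section
/- Fix κ ∈ ℝ. For a nonzero lattice point l = (l1,l2) ∈ ℕ₀² define λ_l = arctan(l2/l1) if l1 > 0 and λ_l = π/2 if l1 = 0, and for R > 0 let N(R) = #{ l ∈ ℕ₀², l ≠ (0,0), ‖l‖ ≤ R }. Then lim_{R→∞} (1/N(R)) · Σ_{l ∈ ℕ₀², 0 < ‖l‖ ≤ R} ( 4·cos(2λ_l)·cos(2κ) − cos(4λ_l)·cos(4κ) ) = 0. -/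
/-- Angle of a lattice point with the positive horizontal axis:
λ_l = arctan(l2/l1) if l1 > 0, and π/2 if l1 = 0. -/
noncomputable def lamAngle (l : ℕ × ℕ) : ℝ :=
  if l.1 = 0 then Real.pi / 2 else Real.arctan ((l.2 : ℝ) / (l.1 : ℝ))

/-- The nonzero lattice points of the quarter disk of radius R. -/
def quarterDisk (R : ℕ) : Finset (ℕ × ℕ) :=
  (Finset.range (R + 1) ×ˢ Finset.range (R + 1)).filter
    (fun l => 0 < l.1 ^ 2 + l.2 ^ 2 ∧ l.1 ^ 2 + l.2 ^ 2 ≤ R ^ 2)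

/-- Closed quarter disk in the plane. -/
def qs : Set (Fin 2 → ℝ) := {x | 0 ≤ x 0 ∧ 0 ≤ x 1 ∧ x 0 ^ 2 + x 1 ^ 2 ≤ 1}

/-- Regularised version of cos(4λ). -/
noncomputable def pF (ε : ℝ) (x : Fin 2 → ℝ) : ℝ :=
  (x 0 ^ 4 - 6 * x 0 ^ 2 * x 1 ^ 2 + x 1 ^ 4) / (max ε (x 0 ^ 2 + x 1 ^ 2)) ^ 2

theorem pF_continuous {ε : ℝ} (hε : 0 < ε) : Continuous (pF ε) := by
  unfold pF
  refine Continuous.div (by fun_prop) (by fun_prop) fun x => ?_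
  have : 0 < max ε (x 0 ^ 2 + x 1 ^ 2) := lt_max_of_lt_left hε
  positivity

theorem qs_convex : Convex ℝ qs := by
  intro x hx y hy a b ha hb hab
  obtain ⟨h1, h2, h3⟩ := hx
  obtain ⟨k1, k2, k3⟩ := hy
  refine ⟨?_, ?_, ?_⟩
  · simp only [Pi.add_apply, Pi.smul_apply, smul_eq_mul]; positivity
  · simp only [Pi.add_apply, Pi.smul_apply, smul_eq_mul]; positivity
  · simp only [Pi.add_apply, Pi.smul_apply, smul_eq_mul]
    have hb' : b = 1 - a := by linarith
    subst hb'
    nlinarith [mul_nonneg (mul_nonneg ha hb) (sq_nonneg (x 0 - y 0)),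
      mul_nonneg (mul_nonneg ha hb) (sq_nonneg (x 1 - y 1)),
      mul_le_mul_of_nonneg_left h3 ha, mul_le_mul_of_nonneg_left k3 hb]

theorem qs_closed : IsClosed qs := by
  exact (isClosed_le (f := (fun _ : Fin 2 → ℝ => (0 : ℝ)))
    (g := (fun x : Fin 2 → ℝ => x 0)) (by fun_prop) (by fun_prop)).inter
   ((isClosed_le (f := (fun _ : Fin 2 → ℝ => (0 : ℝ)))
    (g := (fun x : Fin 2 → ℝ => x 1)) (by fun_prop) (by fun_prop)).inter
    (isClosed_le (f := (fun x : Fin 2 → ℝ => x 0 ^ 2 + x 1 ^ 2))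
    (g := (fun _ : Fin 2 → ℝ => (1 : ℝ))) (by fun_prop) (by fun_prop)))

theorem qs_bounded : Bornology.IsBounded qs := by
  refine (Metric.isBounded_closedBall (x := (0 : Fin 2 → ℝ)) (r := 1)).subset ?_
  intro x hx
  obtain ⟨h1, h2, h3⟩ := hx
  rw [mem_closedBall_zero_iff, pi_norm_le_iff_of_nonneg zero_le_one]
  intro i
  rw [Real.norm_eq_abs, ← sq_le_one_iff_abs_le_one]
  fin_cases i
  · simp only [Fin.zero_eta]; nlinarith [sq_nonneg (x 1)]
  · simp only [Fin.mk_one]; nlinarith [sq_nonneg (x 0)]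

/-- First half octant. -/
def o1 : Set (Fin 2 → ℝ) := {x | 0 ≤ x 1 ∧ x 1 < x 0 ∧ x 0 ^ 2 + x 1 ^ 2 ≤ 1}
/-- Second half octant. -/
def o2 : Set (Fin 2 → ℝ) := {x | 0 < x 0 ∧ x 0 ≤ x 1 ∧ x 0 ^ 2 + x 1 ^ 2 ≤ 1}

theorem o1_meas : MeasurableSet o1 := by
  exact (measurableSet_le (f := (fun _ : Fin 2 → ℝ => (0 : ℝ)))
    (g := (fun x : Fin 2 → ℝ => x 1)) (by fun_prop) (by fun_prop)).inter
   ((measurableSet_lt (f := (fun x : Fin 2 → ℝ => x 1))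
    (g := (fun x : Fin 2 → ℝ => x 0)) (by fun_prop) (by fun_prop)).inter
    (measurableSet_le (f := (fun x : Fin 2 → ℝ => x 0 ^ 2 + x 1 ^ 2))
    (g := (fun _ : Fin 2 → ℝ => (1 : ℝ))) (by fun_prop) (by fun_prop)))

theorem o2_meas : MeasurableSet o2 := by
  exact (measurableSet_lt (f := (fun _ : Fin 2 → ℝ => (0 : ℝ)))
    (g := (fun x : Fin 2 → ℝ => x 0)) (by fun_prop) (by fun_prop)).inter
   ((measurableSet_le (f := (fun x : Fin 2 → ℝ => x 0))
    (g := (fun x : Fin 2 → ℝ => x 1)) (by fun_prop) (by fun_prop)).inter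
    (measurableSet_le (f := (fun x : Fin 2 → ℝ => x 0 ^ 2 + x 1 ^ 2))
    (g := (fun _ : Fin 2 → ℝ => (1 : ℝ))) (by fun_prop) (by fun_prop)))

theorem o1_sub : o1 ⊆ qs := fun x ⟨h1, h2, h3⟩ => ⟨by linarith, h1, h3⟩
theorem o2_sub : o2 ⊆ qs := fun x ⟨h1, h2, h3⟩ => ⟨h1.le, by linarith, h3⟩

theorem int_o2 {ε : ℝ} (hε : 0 < ε) : ∫ x in o2, pF ε x = - ∫ x in o1, pF ε x := by
  obtain ⟨c, hc, hc2⟩ : ∃ c : ℝ, 0 < c ∧ c ^ 2 = 1 / 2 :=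
    ⟨√(1/2), by positivity, Real.sq_sqrt (by norm_num)⟩
  let M : Matrix (Fin 2) (Fin 2) ℝ := !![c, -c; c, c]
  have hdet : M.det = 1 := by
    simp only [M, Matrix.det_fin_two_of]; nlinarith
  have hmap := Real.map_matrix_volume_pi_eq_smul_volume_pi (M := M) (by rw [hdet]; norm_num)
  rw [hdet] at hmap
  simp only [inv_one, abs_one, ENNReal.ofReal_one, one_smul] at hmap
  have h0 : ∀ x, Matrix.toLin' M x 0 = c * (x 0 - x 1) := by
    intro x; simp [M, Matrix.toLin'_apply, Matrix.mulVec, dotProduct, Fin.sum_univ_two]; ring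
  have h1 : ∀ x, Matrix.toLin' M x 1 = c * (x 0 + x 1) := by
    intro x; simp [M, Matrix.toLin'_apply, Matrix.mulVec, dotProduct, Fin.sum_univ_two]; ring
  have hcont : Continuous (Matrix.toLin' M) := LinearMap.continuous_of_finiteDimensional _
  have hn : ∀ x, (Matrix.toLin' M x 0) ^ 2 + (Matrix.toLin' M x 1) ^ 2 = x 0 ^ 2 + x 1 ^ 2 := by
    intro x; rw [h0, h1, mul_pow, mul_pow, hc2]; ring
  have hF : ∀ x, pF ε (Matrix.toLin' M x) = - pF ε x := by
    intro x
    unfold pF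
    rw [hn, h0, h1, ← neg_div]
    congr 1
    have hc4 : c ^ 4 = 1 / 4 := by
      rw [show c ^ 4 = (c ^ 2) ^ 2 by ring, hc2]; norm_num
    calc _ = c ^ 4 * ((x 0 - x 1) ^ 4 - 6 * (x 0 - x 1) ^ 2 * (x 0 + x 1) ^ 2 + (x 0 + x 1) ^ 4) := by
          ring
      _ = _ := by rw [hc4]; ring
  have hO : ∀ x, Matrix.toLin' M x ∈ o2 ↔ x ∈ o1 := by
    intro x
    have e1 : 0 < Matrix.toLin' M x 0 ↔ x 1 < x 0 := by
      rw [h0, mul_pos_iff_of_pos_left hc, sub_pos]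
    have e2 : Matrix.toLin' M x 0 ≤ Matrix.toLin' M x 1 ↔ 0 ≤ x 1 := by
      rw [h0, h1, mul_le_mul_iff_right₀ hc]; constructor <;> intro h <;> linarith
    unfold o1 o2
    simp only [Set.mem_ofPred_eq]
    rw [hn, e1, e2]
    tauto
  rw [← MeasureTheory.integral_indicator o2_meas, ← MeasureTheory.integral_indicator o1_meas,
    ← MeasureTheory.integral_neg]
  conv_lhs => rw [← hmap]
  rw [MeasureTheory.integral_map hcont.aemeasurable
    ((pF_continuous hε).measurable.indicator o2_meas).aestronglyMeasurable]
  congr 1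
  ext x
  by_cases hx : x ∈ o1
  · rw [Set.indicator_of_mem hx, Set.indicator_of_mem ((hO x).2 hx), hF]
  · rw [Set.indicator_of_notMem hx, Set.indicator_of_notMem (fun h => hx ((hO x).1 h)), neg_zero]

theorem int_qs {ε : ℝ} (hε : 0 < ε) : ∫ x in qs, pF ε x = 0 := by
  have hi : MeasureTheory.IntegrableOn (pF ε) qs :=
    (pF_continuous hε).continuousOn.integrableOn_compact
      (Metric.isCompact_of_isClosed_isBounded qs_closed qs_bounded)
  have hae : qs =ᵐ[MeasureTheory.volume] (o1 ∪ o2 : Set (Fin 2 → ℝ)) := by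
    have hne := MeasureTheory.Measure.ae_eval_ne
      (fun _ : Fin 2 => (MeasureTheory.volume : MeasureTheory.Measure ℝ)) 0 0
    rw [← MeasureTheory.volume_pi] at hne
    filter_upwards [hne] with x hx
    refine propext ⟨?_, ?_⟩
    · rintro ⟨h1, h2, h3⟩
      have h4 : 0 < x 0 := lt_of_le_of_ne h1 (Ne.symm hx)
      rcases lt_or_ge (x 1) (x 0) with h | h
      · exact Or.inl ⟨h2, h, h3⟩
      · exact Or.inr ⟨h4, h, h3⟩
    · rintro (h | h)
      · exact o1_sub h
      · exact o2_sub h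
  rw [MeasureTheory.setIntegral_congr_set hae, MeasureTheory.setIntegral_union _ o2_meas
    (hi.mono_set o1_sub) (hi.mono_set o2_sub), int_o2 hε, add_neg_cancel]
  rw [Set.disjoint_left]
  rintro x ⟨_, h, _⟩ ⟨_, h', _⟩
  linarith

/-- Scaled lattice point. -/
noncomputable def scl (n : ℕ) (l : ℕ × ℕ) : Fin 2 → ℝ := ![(l.1 : ℝ) / n, (l.2 : ℝ) / n]

theorem scl_inj {n : ℕ} (hn : 0 < n) : Function.Injective (scl n) := by
  intro a b h
  have hn' : (n : ℝ) ≠ 0 := by positivity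
  have h0 := congrFun h 0
  have h1 := congrFun h 1
  simp only [scl, Matrix.cons_val_zero, Matrix.cons_val_one] at h0 h1
  rw [div_left_inj' hn'] at h0 h1
  exact Prod.ext (by exact_mod_cast h0) (by exact_mod_cast h1)

theorem mem_quarterDisk {n : ℕ} {l : ℕ × ℕ} :
    l ∈ quarterDisk n ↔ 0 < l.1 ^ 2 + l.2 ^ 2 ∧ l.1 ^ 2 + l.2 ^ 2 ≤ n ^ 2 := by
  unfold quarterDisk
  simp only [Finset.mem_filter, Finset.mem_product, Finset.mem_range]
  constructor
  · exact fun h => h.2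
  · intro h
    refine ⟨⟨?_, ?_⟩, h⟩ <;> nlinarith

open scoped Pointwise in
theorem tsum_eq {n : ℕ} (hn : 0 < n) (F : (Fin 2 → ℝ) → ℝ) (hF : F 0 = 0) :
    (∑' x : ↑(qs ∩ (n : ℝ)⁻¹ • (Submodule.span ℤ (Set.range (Pi.basisFun ℝ (Fin 2))) :
      Set (Fin 2 → ℝ))), F x) = ∑ l ∈ quarterDisk n, F (scl n l) := by
  classical
  have : NeZero n := ⟨hn.ne'⟩
  have hn' : (0 : ℝ) < n := by exact_mod_cast hn
  have hset : (qs ∩ (n : ℝ)⁻¹ • (Submodule.span ℤ (Set.range (Pi.basisFun ℝ (Fin 2))) :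
      Set (Fin 2 → ℝ))) = ↑((insert (0, 0) (quarterDisk n)).image (scl n)) := by
    ext x
    rw [Set.mem_inter_iff]
    have hm : x ∈ (n : ℝ)⁻¹ • (Submodule.span ℤ (Set.range (Pi.basisFun ℝ (Fin 2))) :
      Set (Fin 2 → ℝ)) ↔ ∀ i, n * x i ∈ Set.range (algebraMap ℤ ℝ) :=
      BoxIntegral.unitPartition.mem_smul_span_iff
    rw [hm]
    simp only [Finset.coe_image, Set.mem_image, Finset.mem_coe, Finset.mem_insert]
    constructor
    · rintro ⟨⟨h1, h2, h3⟩, h⟩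
      obtain ⟨a, ha⟩ := h 0
      obtain ⟨b, hb⟩ := h 1
      simp only [algebraMap_int_eq, eq_intCast] at ha hb
      have ha0 : 0 ≤ a := by
        have : (0 : ℝ) ≤ a := by rw [ha]; positivity
        exact_mod_cast this
      have hb0 : 0 ≤ b := by
        have : (0 : ℝ) ≤ b := by rw [hb]; positivity
        exact_mod_cast this
      lift a to ℕ using ha0
      lift b to ℕ using hb0
      push_cast at ha hb
      refine ⟨(a, b), ?_, ?_⟩
      · by_cases h0 : (a, b) = (0, 0)
        · exact Or.inl h0
        · right
          rw [mem_quarterDisk]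
          constructor
          · by_contra hh
            apply h0
            have : a ^ 2 + b ^ 2 = 0 := by simpa using hh
            have h5 : a = 0 := by nlinarith
            have h6 : b = 0 := by nlinarith
            rw [h5, h6]
          · have : (a : ℝ) ^ 2 + b ^ 2 ≤ n ^ 2 := by
              rw [ha, hb]; nlinarith [sq_nonneg (n : ℝ)]
            exact_mod_cast this
      · ext i
        fin_cases i
        · simp [scl, ha, hn'.ne']
        · simp [scl, hb, hn'.ne']
    · rintro ⟨l, hl, rfl⟩
      have hl2 : l.1 ^ 2 + l.2 ^ 2 ≤ n ^ 2 := by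
        rcases hl with rfl | hl
        · simp
        · exact (mem_quarterDisk.1 hl).2
      refine ⟨⟨?_, ?_, ?_⟩, ?_⟩
      · change 0 ≤ (l.1 : ℝ) / n; positivity
      · change 0 ≤ (l.2 : ℝ) / n; positivity
      · simp only [scl, Matrix.cons_val_zero, Matrix.cons_val_one]
        rw [div_pow, div_pow, ← add_div, div_le_one (by positivity)]
        exact_mod_cast hl2
      · intro i
        fin_cases i
        · exact ⟨l.1, by simp [scl]; field_simp⟩
        · exact ⟨l.2, by simp [scl]; field_simp⟩
  rw [hset, Finset.tsum_subtype' _ F, Finset.sum_image ((scl_inj hn).injOn), Finset.sum_insert]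
  · have : scl n (0, 0) = 0 := by ext i; fin_cases i <;> simp [scl]
    rw [this, hF, zero_add]
  · simp [mem_quarterDisk]

theorem cos2 {l : ℕ × ℕ} (h : 0 < l.1 ^ 2 + l.2 ^ 2) :
    Real.cos (2 * lamAngle l) = ((l.1 : ℝ) ^ 2 - l.2 ^ 2) / (l.1 ^ 2 + l.2 ^ 2) := by
  unfold lamAngle
  split_ifs with h0
  · rw [h0] at h ⊢
    have : (l.2 : ℝ) ≠ 0 := by
      rintro h2
      have : l.2 = 0 := by exact_mod_cast h2
      simp [this] at h
    rw [mul_div_cancel₀ _ two_ne_zero, Real.cos_pi]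
    field_simp
    simp
  · have h1 : (l.1 : ℝ) ≠ 0 := by exact_mod_cast h0
    rw [Real.cos_two_mul, Real.cos_sq_arctan]
    field_simp
    ring

theorem cos4 {l : ℕ × ℕ} (h : 0 < l.1 ^ 2 + l.2 ^ 2) :
    Real.cos (4 * lamAngle l) = ((l.1 : ℝ) ^ 4 - 6 * l.1 ^ 2 * l.2 ^ 2 + l.2 ^ 4) /
      ((l.1 : ℝ) ^ 2 + l.2 ^ 2) ^ 2 := by
  have h' : (0 : ℝ) < (l.1 : ℝ) ^ 2 + l.2 ^ 2 := by exact_mod_cast h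
  rw [show 4 * lamAngle l = 2 * (2 * lamAngle l) by ring, Real.cos_two_mul, cos2 h]
  field_simp
  ring

theorem sum_cos2 (n : ℕ) : ∑ l ∈ quarterDisk n, Real.cos (2 * lamAngle l) = 0 := by
  have h : ∑ l ∈ quarterDisk n, Real.cos (2 * lamAngle l) =
      ∑ l ∈ quarterDisk n, - Real.cos (2 * lamAngle l) := by
    refine Finset.sum_bij' (fun l _ => l.swap) (fun l _ => l.swap) ?_ ?_ ?_ ?_ ?_
    · intro l hl; rw [mem_quarterDisk] at hl ⊢; simpa [add_comm] using hl
    · intro l hl; rw [mem_quarterDisk] at hl ⊢; simpa [add_comm] using hl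
    · intro l _; simp
    · intro l _; simp
    · intro l hl
      rw [mem_quarterDisk] at hl
      rw [cos2 hl.1, cos2 (by simpa [add_comm] using hl.1), ← neg_div]
      simp only [Prod.fst_swap, Prod.snd_swap]
      rw [add_comm]; congr 1; ring
  rw [Finset.sum_neg_distrib] at h
  linarith

/-- The difference between cos(4λ) and its regularisation. -/
theorem diff_bound {n : ℕ} (hn : 0 < n) {η : ℝ} (hη : 0 < η) {l : ℕ × ℕ}
    (h : 0 < l.1 ^ 2 + l.2 ^ 2) :
    |Real.cos (4 * lamAngle l) - pF (η ^ 2) (scl n l)| ≤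
      if (l.1 : ℝ) ^ 2 + l.2 ^ 2 < (η * n) ^ 2 then 1 else 0 := by
  have hn' : (0 : ℝ) < n := by exact_mod_cast hn
  have h' : (0 : ℝ) < (l.1 : ℝ) ^ 2 + l.2 ^ 2 := by exact_mod_cast h
  set q : ℝ := (l.1 : ℝ) ^ 2 + l.2 ^ 2 with hq
  set m : ℝ := max ((η * n) ^ 2) q with hm
  have hmpos : 0 < m := lt_max_of_lt_right h'
  have hqm : q ≤ m := le_max_right _ _
  have hp : pF (η ^ 2) (scl n l) = Real.cos (4 * lamAngle l) * (q / m) ^ 2 := by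
    rw [cos4 h, ← hq]
    unfold pF
    have : max (η ^ 2) ((scl n l 0) ^ 2 + (scl n l 1) ^ 2) = m / n ^ 2 := by
      simp only [scl, Matrix.cons_val_zero, Matrix.cons_val_one]
      rw [hm, ← max_div_div_right (by positivity : (0 : ℝ) ≤ (n : ℝ) ^ 2)]
      congr 1
      · field_simp
      · rw [hq]; field_simp
    rw [this]
    simp only [scl, Matrix.cons_val_zero, Matrix.cons_val_one]
    field_simp
  rw [hp]
  split_ifs with hlt
  · have h1 : q / m ≤ 1 := (div_le_one hmpos).2 hqm
    have h0 : 0 ≤ q / m := by positivity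
    rw [show ∀ a b : ℝ, a - a * b = a * (1 - b) by intros; ring, abs_mul]
    have hb : |1 - (q / m) ^ 2| ≤ 1 := by
      rw [abs_le]; constructor <;> nlinarith
    exact mul_le_one₀ (Real.abs_cos_le_one _) (abs_nonneg _) hb
  · have : m = q := max_eq_right (not_lt.1 hlt)
    rw [this, div_self h'.ne']
    simp

theorem sum_diff {n : ℕ} (hn : 0 < n) {η : ℝ} (hη : 0 < η) :
    |∑ l ∈ quarterDisk n, Real.cos (4 * lamAngle l) -
      ∑ l ∈ quarterDisk n, pF (η ^ 2) (scl n l)| ≤ (η * n + 1) ^ 2 := by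
  have hn' : (0 : ℝ) < n := by exact_mod_cast hn
  have hpos : 0 < η * n := by positivity
  rw [← Finset.sum_sub_distrib]
  refine (Finset.abs_sum_le_sum_abs _ _).trans ?_
  refine (Finset.sum_le_sum fun l hl => diff_bound hn hη (mem_quarterDisk.1 hl).1).trans ?_
  rw [← Finset.sum_filter, Finset.sum_const, nsmul_eq_mul, mul_one]
  set k := ⌈η * n⌉₊
  have hk : (k : ℝ) ≤ η * n + 1 := (Nat.ceil_lt_add_one hpos.le).le
  have hsub : (quarterDisk n).filter (fun l => (l.1 : ℝ) ^ 2 + l.2 ^ 2 < (η * n) ^ 2) ⊆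
      Finset.range k ×ˢ Finset.range k := by
    intro l hl
    rw [Finset.mem_filter] at hl
    rw [Finset.mem_product, Finset.mem_range, Finset.mem_range]
    constructor
    · exact Nat.lt_ceil.2 (lt_of_pow_lt_pow_left₀ 2 hpos.le (by nlinarith [sq_nonneg (l.2 : ℝ)]))
    · exact Nat.lt_ceil.2 (lt_of_pow_lt_pow_left₀ 2 hpos.le (by nlinarith [sq_nonneg (l.1 : ℝ)]))
  have hc := Finset.card_le_card hsub
  rw [Finset.card_product, Finset.card_range] at hc
  have hc' : (((quarterDisk n).filter
      (fun l => (l.1 : ℝ) ^ 2 + l.2 ^ 2 < (η * n) ^ 2)).card : ℝ) ≤ (k : ℝ) * k := by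
    exact_mod_cast hc
  have hk0 : (0 : ℝ) ≤ k := by positivity
  nlinarith

theorem sum_cos4_tendsto : Filter.Tendsto
    (fun n : ℕ => (∑ l ∈ quarterDisk n, Real.cos (4 * lamAngle l)) / (n : ℝ) ^ 2)
    Filter.atTop (nhds 0) := by
  rw [Metric.tendsto_atTop']
  intro δ hδ
  obtain ⟨η, hη, hηδ⟩ : ∃ η : ℝ, 0 < η ∧ 4 * η ^ 2 = δ / 2 :=
    ⟨√(δ / 8), by positivity, by rw [Real.sq_sqrt (by positivity)]; ring⟩
  have hε : 0 < η ^ 2 := by positivity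
  have ht := tendsto_tsum_div_pow_atTop_integral qs (pF (η ^ 2)) (pF_continuous hε) qs_bounded
    qs_closed.measurableSet (qs_convex.addHaar_frontier _)
  rw [int_qs hε, Metric.tendsto_atTop] at ht
  obtain ⟨N, hN⟩ := ht (δ / 2) (by positivity)
  refine ⟨max N (⌈1 / η⌉₊ + 1), fun n hn => ?_⟩
  have h1 : N ≤ n := (le_max_left _ _).trans hn.le
  have h2 : ⌈1 / η⌉₊ + 1 < n := (le_max_right _ _).trans_lt hn
  have hn0 : 0 < n := by omega
  have hn' : (0 : ℝ) < n := by exact_mod_cast hn0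
  have h3 : 1 ≤ η * n := by
    have : 1 / η ≤ n := (Nat.le_ceil _).trans (by exact_mod_cast (by omega : ⌈1 / η⌉₊ ≤ n))
    rw [div_le_iff₀ hη] at this
    linarith
  have h4 := hN n h1
  rw [tsum_eq hn0 _ (by simp [pF]), Fintype.card_fin, Real.dist_0_eq_abs] at h4
  rw [Real.dist_0_eq_abs]
  have h5 := sum_diff hn0 hη
  rw [abs_div, abs_of_pos (by positivity : (0 : ℝ) < (n : ℝ) ^ 2), div_lt_iff₀ (by positivity)]
    at h4 ⊢
  have h6 : (η * n + 1) ^ 2 ≤ δ / 2 * n ^ 2 := by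
    rw [← hηδ]; nlinarith
  have h7 := abs_sub_abs_le_abs_sub (∑ l ∈ quarterDisk n, Real.cos (4 * lamAngle l))
      (∑ l ∈ quarterDisk n, pF (η ^ 2) (scl n l))
  linarith

theorem card_bound {n : ℕ} (hn : 2 ≤ n) : (n : ℝ) ^ 2 / 16 ≤ (quarterDisk n).card := by
  have hsub : Finset.Icc 1 (n / 2) ×ˢ Finset.Icc 1 (n / 2) ⊆ quarterDisk n := by
    intro l hl
    rw [Finset.mem_product, Finset.mem_Icc, Finset.mem_Icc] at hl
    rw [mem_quarterDisk]
    have h1 : 2 * l.1 ≤ n := by omega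
    have h2 : 2 * l.2 ≤ n := by omega
    constructor <;> nlinarith
  have hc := Finset.card_le_card hsub
  rw [Finset.card_product, Nat.card_Icc, Nat.add_sub_cancel] at hc
  have h4 : n ≤ 4 * (n / 2) := by omega
  have h5 : n ^ 2 ≤ 16 * (quarterDisk n).card := by nlinarith
  have h6 : (n : ℝ) ^ 2 ≤ 16 * (quarterDisk n).card := by exact_mod_cast h5
  linarith

theorem average_angle_function_vanishes (κ : ℝ) :
    Filter.Tendsto
      (fun R : ℕ => (1 / ((quarterDisk R).card : ℝ)) *
        ∑ l ∈ quarterDisk R,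
          (4 * Real.cos (2 * lamAngle l) * Real.cos (2 * κ) -
            Real.cos (4 * lamAngle l) * Real.cos (4 * κ)))
      Filter.atTop (nhds 0) := by
  have h := (sum_cos4_tendsto.abs).const_mul 16
  rw [abs_zero, mul_zero] at h
  refine squeeze_zero_norm' ?_ h
  filter_upwards [Filter.eventually_ge_atTop 2] with n hn
  have hn' : (0 : ℝ) < n := by exact_mod_cast (by omega : 0 < n)
  have hcard := card_bound hn
  have hs : ∑ l ∈ quarterDisk n, (4 * Real.cos (2 * lamAngle l) * Real.cos (2 * κ) -
            Real.cos (4 * lamAngle l) * Real.cos (4 * κ)) =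
      - ((∑ l ∈ quarterDisk n, Real.cos (4 * lamAngle l)) * Real.cos (4 * κ)) := by
    rw [Finset.sum_sub_distrib, ← Finset.sum_mul, ← Finset.sum_mul, ← Finset.mul_sum, sum_cos2]
    ring
  rw [hs, Real.norm_eq_abs, abs_mul, abs_neg, abs_mul, abs_div, abs_div, abs_one, Nat.abs_cast,
    abs_of_pos (by positivity : (0 : ℝ) < (n : ℝ) ^ 2)]
  set S := |∑ l ∈ quarterDisk n, Real.cos (4 * lamAngle l)|
  have hS : 0 ≤ S := abs_nonneg _
  have hcp : (0 : ℝ) < n ^ 2 / 16 := by positivity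
  calc 1 / ((quarterDisk n).card : ℝ) * (S * |Real.cos (4 * κ)|)
      ≤ 1 / ((n : ℝ) ^ 2 / 16) * (S * 1) := by
        gcongr
        exact Real.abs_cos_le_one _
    _ = 16 * (S / n ^ 2) := by field_simp
end

section
/- Let q ∈ [−1,1] and let (m_l)_{l≥3} be a sequence of integers with |m_l| ≤ l for all l and lim_{l→∞} m_l/l = q. Then lim_{l→∞} Cpe(l, m_l) = −(525/(32π))·q⁴·(1 − q²). -/
/-- The common square term Q(l,m). -/
noncomputable def Qf (l : ℕ) (m : ℤ) : ℝ :=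
  (1 / 8) * (((l : ℝ) ^ 2 - (m : ℝ) ^ 2) / ((2 * (l : ℝ) + 1) * (2 * (l : ℝ) - 1)) +
    (((l : ℝ) + 1) ^ 2 - (m : ℝ) ^ 2) / ((2 * (l : ℝ) + 3) * (2 * (l : ℝ) + 1)) - 1 / 5) ^ 2

/-- The coefficient ϑ(l,m). -/
noncomputable def thf (l : ℕ) (m : ℤ) : ℝ :=
  (1 / 8) * ((((l : ℝ) + 2) ^ 2 - (m : ℝ) ^ 2) * (((l : ℝ) + 1) ^ 2 - (m : ℝ) ^ 2) *
      ((l : ℝ) + 1) * (l : ℝ)) /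
    ((2 * (l : ℝ) + 3) ^ 2 * (2 * (l : ℝ) + 5) * (2 * (l : ℝ) + 1) * ((l : ℝ) + 2) * ((l : ℝ) + 3)) +
  (1 / 8) * ((((l : ℝ) - 1) ^ 2 - (m : ℝ) ^ 2) * ((l : ℝ) ^ 2 - (m : ℝ) ^ 2) *
      ((l : ℝ) + 1) * (l : ℝ)) /
    ((2 * (l : ℝ) - 3) * (2 * (l : ℝ) - 1) ^ 2 * (2 * (l : ℝ) + 1) * ((l : ℝ) - 2) * ((l : ℝ) - 1)) +
  Qf l m

/-- The coefficient ϱ(l,m). -/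
noncomputable def rhf (l : ℕ) (m : ℤ) : ℝ :=
  (1 / 8) * ((((l : ℝ) + 2) ^ 2 - (m : ℝ) ^ 2) * (((l : ℝ) + 1) ^ 2 - (m : ℝ) ^ 2)) /
    ((2 * (l : ℝ) + 1) * (2 * (l : ℝ) + 3) ^ 2 * (2 * (l : ℝ) + 5)) +
  (1 / 8) * ((((l : ℝ) - 1) ^ 2 - (m : ℝ) ^ 2) * ((l : ℝ) ^ 2 - (m : ℝ) ^ 2)) /
    ((2 * (l : ℝ) - 3) * (2 * (l : ℝ) - 1) ^ 2 * (2 * (l : ℝ) + 1)) +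
  Qf l m

/-- The coefficient γ(l,m). -/
noncomputable def gaf (l : ℕ) (m : ℤ) : ℝ :=
  (1 / 8) * ((((l : ℝ) + 2) ^ 2 - (m : ℝ) ^ 2) * (((l : ℝ) + 1) ^ 2 - (m : ℝ) ^ 2) *
      ((l : ℝ) + 2) * ((l : ℝ) + 3)) /
    ((2 * (l : ℝ) + 1) * (2 * (l : ℝ) + 3) ^ 2 * (2 * (l : ℝ) + 5) * ((l : ℝ) + 1) * (l : ℝ)) +
  (1 / 8) * ((((l : ℝ) - 1) ^ 2 - (m : ℝ) ^ 2) * ((l : ℝ) ^ 2 - (m : ℝ) ^ 2) *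
      ((l : ℝ) - 2) * ((l : ℝ) - 1)) /
    ((2 * (l : ℝ) - 3) * (2 * (l : ℝ) - 1) ^ 2 * (2 * (l : ℝ) + 1) * ((l : ℝ) + 1) * (l : ℝ)) +
  Qf l m

/-- The sectional curvature C(e⁰₃, e^m_l) of SDiff(𝕊²) (Theorem 5.3 of the paper). -/
noncomputable def Cpe (l : ℕ) (m : ℤ) : ℝ :=
  -(525 * (m : ℝ) ^ 2 / (32 * Real.pi)) *
    (3 * gaf l m - 2 * (12 / ((l : ℝ) * ((l : ℝ) + 1)) + 1) * rhf l m -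
      (12 / ((l : ℝ) * ((l : ℝ) + 1)) - 1) ^ 2 * thf l m)

noncomputable def aF (x u : ℝ) : ℝ :=
  ((1 + 2 * x) ^ 2 - u) * ((1 + x) ^ 2 - u) / (8 * (2 + x) * (2 + 3 * x) ^ 2 * (2 + 5 * x))

noncomputable def bF (x u : ℝ) : ℝ :=
  ((1 - x) ^ 2 - u) * (1 - u) / (8 * (2 + x) * (2 - x) ^ 2 * (2 - 3 * x))

/-- `(aF - bF) / x`, in a form that is continuous at `x = 0`. -/
noncomputable def kF (x u : ℝ) : ℝ :=
  ((8 + 12 * x + 12 * x ^ 2 + 4 * x ^ 3 - u * (8 + 4 * x)) * ((2 - x) ^ 2 * (2 - 3 * x)) +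
    ((1 - x) ^ 2 - u) * (1 - u) * (-64 - 64 * x - 48 * x ^ 2)) /
  (8 * (2 + x) * (2 + 3 * x) ^ 2 * (2 + 5 * x) * (2 - x) ^ 2 * (2 - 3 * x))

noncomputable def rF (x : ℝ) : ℝ := (1 + x) / ((1 + 2 * x) * (1 + 3 * x))

noncomputable def sF (x : ℝ) : ℝ := (1 + x) / ((1 - x) * (1 - 2 * x))

/-- `(rF - sF) / x`, in a form that is continuous at `x = 0`. -/
noncomputable def wF (x : ℝ) : ℝ :=
  (-8 - 4 * x) * (1 + x) / ((1 + 2 * x) * (1 + 3 * x) * (1 - x) * (1 - 2 * x))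

noncomputable def qF (x u : ℝ) : ℝ :=
  (1 / 8) * ((1 - u) / ((2 + x) * (2 - x)) + ((1 + x) ^ 2 - u) / ((2 + 3 * x) * (2 + x)) - 1 / 5) ^ 2

noncomputable def GF (x u : ℝ) : ℝ :=
  (1 / (1 + x)) * ((3 + rF x) * 6 * aF x u + (3 + sF x) * 2 * bF x u +
    4 * (kF x u * (3 + rF x) + bF x u * wF x)) +
  (24 / (1 + x)) * (aF x u * (rF x - 1) + bF x u * (sF x - 1)) -
  x ^ 2 * (144 / (1 + x) ^ 2) * (aF x u * rF x + bF x u * sF x + qF x u)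

lemma kF_eq (x u : ℝ) (h0 : 0 < x) (h1 : x ≤ 1 / 3) : aF x u - bF x u = x * kF x u := by
  have h2 : 2 + x ≠ 0 := by linarith
  have h3 : 2 + 3 * x ≠ 0 := by linarith
  have h4 : 2 + 5 * x ≠ 0 := by linarith
  have h5 : 2 - x ≠ 0 := by linarith
  have h6 : 2 - 3 * x ≠ 0 := by linarith
  have h7 : 2 - x * 3 ≠ 0 := by linarith
  unfold aF bF kF
  field_simp
  ring

lemma wF_eq (x : ℝ) (h0 : 0 < x) (h1 : x ≤ 1 / 3) : rF x - sF x = x * wF x := by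
  have h2 : 1 + 2 * x ≠ 0 := by linarith
  have h3 : 1 + 3 * x ≠ 0 := by linarith
  have h4 : 1 - x ≠ 0 := by linarith
  have h5 : 1 - 2 * x ≠ 0 := by linarith
  have h6 : 1 - x * 2 ≠ 0 := by linarith
  unfold rF sF wF
  field_simp
  ring

/-- The bracket, with `γ, ϱ, ϑ` expressed through `a, b, r, s`. -/
lemma bracket_eq (x a b k r s w Q : ℝ) (h0 : 0 < x)
    (hr : r ≠ 0) (hs : s ≠ 0) (hk : a - b = x * k) (hw : r - s = x * w)
    (hr1 : (1 - r) * (1 + x) = r * (4 * x + 6 * x ^ 2)) 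
    (hs1 : (1 - s) * (1 + x) = s * (-4 * x + 2 * x ^ 2)) :
    3 * (a / r + b / s + Q) - 2 * (12 * x ^ 2 / (1 + x) + 1) * (a + b + Q) -
      (12 * x ^ 2 / (1 + x) - 1) ^ 2 * (a * r + b * s + Q) =
    x ^ 2 * ((1 / (1 + x)) * ((3 + r) * 6 * a + (3 + s) * 2 * b +
      4 * (k * (3 + r) + b * w)) +
      (24 / (1 + x)) * (a * (r - 1) + b * (s - 1)) -
      x ^ 2 * (144 / (1 + x) ^ 2) * (a * r + b * s + Q)) := by
  have hx : 1 + x ≠ 0 := by linarith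
  have er : 1 / r = 1 + (4 * x + 6 * x ^ 2) / (1 + x) := by
    field_simp; linarith
  have es : 1 / s = 1 + (-4 * x + 2 * x ^ 2) / (1 + x) := by
    field_simp; linarith
  have er' : r = 1 - r * (4 * x + 6 * x ^ 2) / (1 + x) := by
    field_simp; linarith
  have es' : s = 1 - s * (-4 * x + 2 * x ^ 2) / (1 + x) := by
    field_simp; linarith
  rw [div_eq_mul_one_div a r, div_eq_mul_one_div b s, er, es]
  have e : (4 * x) * (x * k * (3 + r) + b * (x * w)) =
      4 * x * ((a - b) * (3 + r) + b * (r - s)) := by rw [hk, hw]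
  set y := 1 / (1 + x) with hy
  have y1 : y * (1 + x) = 1 := by rw [hy]; field_simp
  have d : ∀ z : ℝ, z / (1 + x) = z * y := fun z => by rw [hy]; ring
  have d2 : (144 : ℝ) / (1 + x) ^ 2 = 144 * y ^ 2 := by rw [hy]; field_simp
  simp only [d, d2] at *
  linear_combination (-y) * e - a * er' - b * es'

lemma Cpe_eq (l : ℕ) (hl : 3 ≤ l) (m : ℤ) :
    Cpe l m = -(525 / (32 * Real.pi)) * ((m : ℝ) / l) ^ 2 *
      GF (1 / (l : ℝ)) (((m : ℝ) / l) ^ 2) := by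
  have hL : (3 : ℝ) ≤ l := by exact_mod_cast hl
  unfold Cpe gaf rhf thf
  have hQ : Qf l m = qF (1 / (l : ℝ)) (((m : ℝ) / l) ^ 2) := by
    unfold Qf qF
    generalize (l : ℝ) = L at *
    generalize (m : ℝ) = M at *
    have g0 : L ≠ 0 := by linarith
    have g1 : 2 * L + 1 ≠ 0 := by linarith
    have g2 : 2 * L - 1 ≠ 0 := by linarith
    have g3 : 2 * L + 3 ≠ 0 := by linarith
    have t1 : (2 + 1 / L) = (2 * L + 1) / L := by field_simp
    have t2 : (2 - 1 / L) = (2 * L - 1) / L := by field_simp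
    have t3 : (2 + 3 * (1 / L)) = (2 * L + 3) / L := by field_simp
    rw [t1, t2, t3]
    congr 2
    field_simp
  rw [hQ]
  generalize (l : ℝ) = L at *
  generalize (m : ℝ) = M at *
  have hx0 : 0 < 1 / L := by positivity
  have hx1 : 1 / L ≤ 1 / 3 := one_div_le_one_div_of_le (by norm_num) hL
  have g0 : L ≠ 0 := by linarith
  have g1 : 2 * L + 1 ≠ 0 := by linarith
  have g2 : 2 * L - 1 ≠ 0 := by linarith
  have g3 : 2 * L + 3 ≠ 0 := by linarith
  have g4 : 2 * L + 5 ≠ 0 := by linarith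
  have g5 : 2 * L - 3 ≠ 0 := by linarith
  have g6 : L + 1 ≠ 0 := by linarith
  have g7 : L + 2 ≠ 0 := by linarith
  have g8 : L + 3 ≠ 0 := by linarith
  have g9 : L - 1 ≠ 0 := by linarith
  have g10 : L - 2 ≠ 0 := by linarith
  have t1 : (2 + 1 / L) = (2 * L + 1) / L := by field_simp
  have t2 : (2 - 1 / L) = (2 * L - 1) / L := by field_simp
  have t3 : (2 + 3 * (1 / L)) = (2 * L + 3) / L := by field_simp
  have t4 : (2 + 5 * (1 / L)) = (2 * L + 5) / L := by field_simp
  have t5 : (2 - 3 * (1 / L)) = (2 * L - 3) / L := by field_simp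
  have t6 : (1 + 1 / L) = (L + 1) / L := by field_simp
  have t7 : (1 + 2 * (1 / L)) = (L + 2) / L := by field_simp
  have t8 : (1 + 3 * (1 / L)) = (L + 3) / L := by field_simp
  have t9 : (1 - 1 / L) = (L - 1) / L := by field_simp
  have t10 : (1 - 2 * (1 / L)) = (L - 2) / L := by field_simp
  have eA : aF (1 / L) ((M / L) ^ 2) = (1 / 8) * (((L + 2) ^ 2 - M ^ 2) * ((L + 1) ^ 2 - M ^ 2)) /
      ((2 * L + 1) * (2 * L + 3) ^ 2 * (2 * L + 5)) := by
    unfold aF; rw [t1, t3, t4, t6, t7]; field_simp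
  have eB : bF (1 / L) ((M / L) ^ 2) = (1 / 8) * (((L - 1) ^ 2 - M ^ 2) * (L ^ 2 - M ^ 2)) /
      ((2 * L - 3) * (2 * L - 1) ^ 2 * (2 * L + 1)) := by
    unfold bF; rw [t1, t2, t5, t9]; field_simp
  have eR : rF (1 / L) = (L + 1) * L / ((L + 2) * (L + 3)) := by
    unfold rF; rw [t6, t7, t8]; field_simp
  have eS : sF (1 / L) = (L + 1) * L / ((L - 2) * (L - 1)) := by
    unfold sF; rw [t6, t9, t10]; field_simp
  have key := bracket_eq (1 / L) (aF (1 / L) ((M / L) ^ 2)) (bF (1 / L) ((M / L) ^ 2))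
    (kF (1 / L) ((M / L) ^ 2)) (rF (1 / L)) (sF (1 / L)) (wF (1 / L))
    (qF (1 / L) ((M / L) ^ 2)) hx0
    (by rw [eR]; positivity)
    (by rw [eS]; exact div_ne_zero (mul_ne_zero g6 g0) (mul_ne_zero g10 g9))
    (kF_eq _ _ hx0 hx1) (wF_eq _ hx0 hx1)
    (by rw [eR]; field_simp; ring) (by rw [eS]; field_simp; ring)
  have hG : GF (1 / L) ((M / L) ^ 2) = L ^ 2 * ((1 / L) ^ 2 * GF (1 / L) ((M / L) ^ 2)) := by
    field_simp
  rw [hG]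
  conv_rhs => unfold GF
  rw [← key]
  have e1 : 12 * (1 / L) ^ 2 / (1 + 1 / L) = 12 / (L * (L + 1)) := by rw [t6]; field_simp
  rw [e1, eA, eB, eR, eS]
  have e2 : -(525 / (32 * Real.pi)) * (M / L) ^ 2 = -(525 * M ^ 2 / (32 * Real.pi)) / L ^ 2 := by
    field_simp
  rw [e2]
  have e3 : ∀ p z : ℝ, p / L ^ 2 * (L ^ 2 * z) = p * z := fun p z => by field_simp
  rw [e3]
  congr 1
  congr 1
  · congr 1
    · congr 2
      congr 1 <;> field_simp
  · congr 2
    congr 1 <;> field_simp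

lemma GF_tendsto (q : ℝ) :
    Filter.Tendsto (fun p : ℝ × ℝ => GF p.1 p.2) (nhds (0, q ^ 2))
      (nhds (q ^ 2 * (1 - q ^ 2))) := by
  have h : ContinuousAt (fun p : ℝ × ℝ => GF p.1 p.2) (0, q ^ 2) := by
    unfold GF aF bF kF rF sF wF qF
    fun_prop (disch := norm_num)
  have e : GF 0 (q ^ 2) = q ^ 2 * (1 - q ^ 2) := by
    unfold GF aF bF kF rF sF wF qF
    norm_num
    ring
  have := h.tendsto
  simpa only [e] using this

theorem asymptotic_sectional_curvature_rp2
    (q : ℝ) (hq : q ∈ Set.Icc (-1 : ℝ) 1) (m : ℕ → ℤ)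
    (hm : ∀ l : ℕ, 3 ≤ l → |m l| ≤ (l : ℤ))
    (hlim : Filter.Tendsto (fun l : ℕ => (m l : ℝ) / (l : ℝ)) Filter.atTop (nhds q)) :
    Filter.Tendsto (fun l : ℕ => Cpe l (m l)) Filter.atTop
      (nhds (-(525 / (32 * Real.pi)) * q ^ 4 * (1 - q ^ 2))) := by
  have hx : Filter.Tendsto (fun l : ℕ => 1 / (l : ℝ)) Filter.atTop (nhds 0) :=
    tendsto_one_div_atTop_nhds_zero_nat
  have h1 := (GF_tendsto q).comp (hx.prodMk_nhds (hlim.pow 2))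
  have h2 := ((hlim.pow 2).const_mul (-(525 / (32 * Real.pi)))).mul h1
  have e : -(525 / (32 * Real.pi)) * q ^ 4 * (1 - q ^ 2) =
      -(525 / (32 * Real.pi)) * q ^ 2 * (q ^ 2 * (1 - q ^ 2)) := by ring
  rw [e]
  refine h2.congr' ?_
  filter_upwards [Filter.eventually_ge_atTop 3] with l hl
  rw [Cpe_eq l hl]
  rfl
end

section
/- For all integers l ≥ 3 and m with |m| ≤ l and |m| ≠ 1, one has Cpe(l,m) ≤ 0; moreover lim_{l→∞} Cpe(l, 1) = 0 and lim_{l→∞} Cpe(l, −1) = 0. In other words, the sectional curvature Cpe(l,m) can be positive only for m = ±1, and along m = ±1 it tends to zero as l → ∞. -/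
/-- Bracket of the curvature formula over real variables. -/
noncomputable def brR (l M : ℝ) : ℝ :=
  let Q := (1 / 8) * ((l ^ 2 - M) / ((2 * l + 1) * (2 * l - 1)) +
    ((l + 1) ^ 2 - M) / ((2 * l + 3) * (2 * l + 1)) - 1 / 5) ^ 2
  let A := ((l + 2) ^ 2 - M) * ((l + 1) ^ 2 - M)
  let B := ((l - 1) ^ 2 - M) * (l ^ 2 - M)
  3 * ((1 / 8) * (A * (l + 2) * (l + 3)) /
      ((2 * l + 1) * (2 * l + 3) ^ 2 * (2 * l + 5) * (l + 1) * l) +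
      (1 / 8) * (B * (l - 2) * (l - 1)) /
      ((2 * l - 3) * (2 * l - 1) ^ 2 * (2 * l + 1) * (l + 1) * l) + Q)
  - 2 * (12 / (l * (l + 1)) + 1) * ((1 / 8) * A /
      ((2 * l + 1) * (2 * l + 3) ^ 2 * (2 * l + 5)) +
      (1 / 8) * B / ((2 * l - 3) * (2 * l - 1) ^ 2 * (2 * l + 1)) + Q)
  - (12 / (l * (l + 1)) - 1) ^ 2 * ((1 / 8) * (A * (l + 1) * l) /
      ((2 * l + 3) ^ 2 * (2 * l + 5) * (2 * l + 1) * (l + 2) * (l + 3)) +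
      (1 / 8) * (B * (l + 1) * l) /
      ((2 * l - 3) * (2 * l - 1) ^ 2 * (2 * l + 1) * (l - 2) * (l - 1)) + Q)

theorem Cpe_eq_brR (l : ℕ) (m : ℤ) :
    Cpe l m = -(525 * (m : ℝ) ^ 2 / (32 * Real.pi)) * brR (l : ℝ) ((m : ℝ) ^ 2) := by
  simp only [Cpe, gaf, rhf, thf, Qf, brR]

/-- Constant coefficient of the numerator. -/
noncomputable def p0 (x : ℝ) : ℝ :=
  (12960 - 24516 * x - 187974 * x ^ 2 + 409794 * x ^ 3 - 227665 * x ^ 4 + 47944 * x ^ 5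
    - 5968 * x ^ 6) / 25

/-- Linear coefficient of the numerator. -/
noncomputable def p1 (x : ℝ) : ℝ :=
  (25920 + 28728 * x - 248589 * x ^ 2 + 210486 * x ^ 3 + 19408 * x ^ 4 - 11808 * x ^ 5
    + 1280 * x ^ 6) / 5

/-- Quadratic coefficient of the numerator. -/
noncomputable def p2 (x : ℝ) : ℝ :=
  12960 + 33804 * x - 71469 * x ^ 2 + 3192 * x ^ 3 + 1904 * x ^ 4 - 256 * x ^ 5

/-- The common denominator. -/
noncomputable def dn (x : ℝ) : ℝ :=
  x ^ 2 * (x - 2) * (x - 6) * (4 * x - 15) * (4 * x - 3) ^ 2 * (4 * x + 1)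

theorem dn_pos {x : ℝ} (hx : 12 ≤ x) : 0 < dn x := by
  have h1 : 0 < x := by linarith
  have h2 : 0 < x - 2 := by linarith
  have h3 : 0 < x - 6 := by linarith
  have h4 : 0 < 4 * x - 15 := by linarith
  have h5 : 0 < 4 * x - 3 := by linarith
  unfold dn
  positivity

set_option maxHeartbeats 4000000 in
theorem brR_mul {l M : ℝ} (hl : 3 ≤ l) :
    brR l M = (p0 (l * (l + 1)) + p1 (l * (l + 1)) * M + p2 (l * (l + 1)) * M ^ 2)
      / dn (l * (l + 1)) := by
  have e : dn (l * (l + 1)) = l ^ 2 * (l + 1) ^ 2 * (l + 2) * (l + 3) * (l - 1) * (l - 2) *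
      (2 * l - 3) * (2 * l + 5) * (2 * l - 1) ^ 2 * (2 * l + 3) ^ 2 * (2 * l + 1) ^ 2 := by
    unfold dn; ring
  rw [e]
  obtain ⟨t, rfl⟩ : ∃ t, l = t + 3 := ⟨l - 3, by ring⟩
  have ht : 0 ≤ t := by linarith
  have a1 : t + 3 - 1 = t + 2 := by ring
  have a2 : t + 3 - 2 = t + 1 := by ring
  have a3 : t + 3 + 1 = t + 4 := by ring
  have a4 : t + 3 + 2 = t + 5 := by ring
  have a5 : t + 3 + 3 = t + 6 := by ring
  have b1 : 2 * (t + 3) - 1 = 2 * t + 5 := by ring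
  have b2 : 2 * (t + 3) - 3 = 2 * t + 3 := by ring
  have b3 : 2 * (t + 3) + 1 = 2 * t + 7 := by ring
  have b4 : 2 * (t + 3) + 3 = 2 * t + 9 := by ring
  have b5 : 2 * (t + 3) + 5 = 2 * t + 11 := by ring
  simp only [brR, p0, p1, p2, a1, a2, a3, a4, a5, b1, b2, b3, b4, b5]
  field_simp
  ring

theorem num_four {x : ℝ} (hx : 12 ≤ x) : 0 ≤ p0 x + p1 x * 4 + p2 x * 4 ^ 2 := by
  obtain ⟨t, rfl⟩ : ∃ t, x = 12 + t := ⟨x - 12, by ring⟩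
  have ht : 0 ≤ t := by linarith
  simp only [p0, p1, p2]
  ring_nf
  positivity

theorem num_top {l : ℝ} (hl : 3 ≤ l) :
    0 ≤ p0 (l * (l + 1)) + p1 (l * (l + 1)) * l ^ 2 + p2 (l * (l + 1)) * (l ^ 2) ^ 2 := by
  obtain ⟨t, rfl⟩ : ∃ t, l = 3 + t := ⟨l - 3, by ring⟩
  have ht : 0 ≤ t := by linarith
  simp only [p0, p1, p2]
  ring_nf
  positivity

theorem p2_nonpos {x : ℝ} (hx : 12 ≤ x) : p2 x ≤ 0 := by
  obtain ⟨t, rfl⟩ : ∃ t, x = 12 + t := ⟨x - 12, by ring⟩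
  have ht : 0 ≤ t := by linarith
  rw [← neg_nonneg]
  simp only [p2]
  ring_nf
  positivity

theorem num_one {x : ℝ} (hx : 56 ≤ x) : 0 ≤ p0 x + p1 x * 1 + p2 x * 1 ^ 2 := by
  obtain ⟨t, rfl⟩ : ∃ t, x = 56 + t := ⟨x - 56, by ring⟩
  have ht : 0 ≤ t := by linarith
  simp only [p0, p1, p2]
  ring_nf
  positivity

theorem num_one_le {x : ℝ} (hx : 56 ≤ x) :
    (p0 x + p1 x * 1 + p2 x * 1 ^ 2) * x ≤ dn x := by
  obtain ⟨t, rfl⟩ : ∃ t, x = 56 + t := ⟨x - 56, by ring⟩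
  have ht : 0 ≤ t := by linarith
  rw [← sub_nonneg]
  simp only [p0, p1, p2, dn]
  ring_nf
  positivity

theorem brR_nonneg {l M : ℝ} (hl : 3 ≤ l) (h4 : 4 ≤ M) (hM : M ≤ l ^ 2) : 0 ≤ brR l M := by
  have hx : 12 ≤ l * (l + 1) := by nlinarith
  rw [brR_mul hl]
  refine div_nonneg ?_ (dn_pos hx).le
  have a := num_four hx
  have b := num_top hl
  have c := p2_nonpos hx
  generalize p0 (l * (l + 1)) = u at *
  generalize p1 (l * (l + 1)) = v at *
  generalize p2 (l * (l + 1)) = w at *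
  have hpos : 0 < l ^ 2 - 4 := by nlinarith
  have key : (l ^ 2 - 4) * (u + v * M + w * M ^ 2) =
      (l ^ 2 - M) * (u + v * 4 + w * 4 ^ 2) + (M - 4) * (u + v * l ^ 2 + w * (l ^ 2) ^ 2)
      + (-w) * ((l ^ 2 - 4) * ((M - 4) * (l ^ 2 - M))) := by ring
  have h1 : 0 ≤ l ^ 2 - M := by linarith
  have h2 : 0 ≤ M - 4 := by linarith
  have h3 : 0 ≤ -w := by linarith
  refine nonneg_of_mul_nonneg_right (a := l ^ 2 - 4) ?_ hpos
  rw [key]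
  positivity

theorem tendsto_one : Filter.Tendsto (fun l : ℕ => Cpe l 1) Filter.atTop (nhds 0) := by
  have hb : Filter.Tendsto (fun l : ℕ => brR (l : ℝ) 1) Filter.atTop (nhds 0) := by
    refine tendsto_of_tendsto_of_tendsto_of_le_of_le' tendsto_const_nhds
      tendsto_one_div_atTop_nhds_zero_nat ?_ ?_
    · filter_upwards [Filter.eventually_ge_atTop 7] with l hl
      have hl' : (7 : ℝ) ≤ l := by exact_mod_cast hl
      rw [brR_mul (by linarith)]
      exact div_nonneg (num_one (by nlinarith)) (dn_pos (by nlinarith)).le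
    · filter_upwards [Filter.eventually_ge_atTop 7] with l hl
      have hl' : (7 : ℝ) ≤ l := by exact_mod_cast hl
      rw [brR_mul (by linarith)]
      have hn := num_one (x := (l : ℝ) * (l + 1)) (by nlinarith)
      have hle := num_one_le (x := (l : ℝ) * (l + 1)) (by nlinarith)
      rw [div_le_div_iff₀ (dn_pos (by nlinarith)) (by linarith), one_mul]
      refine le_trans (mul_le_mul_of_nonneg_left ?_ hn) hle
      nlinarith
  have := hb.const_mul (-(525 / (32 * Real.pi)))
  simpa [Cpe_eq_brR] using this

theorem positive_curvature_only_for_m_eq_one :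
    (∀ l : ℕ, 3 ≤ l → ∀ m : ℤ, |m| ≤ (l : ℤ) → |m| ≠ 1 → Cpe l m ≤ 0) ∧
    Filter.Tendsto (fun l : ℕ => Cpe l 1) Filter.atTop (nhds 0) ∧
    Filter.Tendsto (fun l : ℕ => Cpe l (-1)) Filter.atTop (nhds 0) := by
  refine ⟨?_, tendsto_one, ?_⟩
  · intro l hl m hm hm1
    by_cases h0 : m = 0
    · subst h0; simp [Cpe]
    have habs : 0 < |m| := abs_pos.mpr h0
    have h2 : 2 ≤ |m| := by omega
    have hlR : (3 : ℝ) ≤ l := by exact_mod_cast hl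
    have h4 : (4 : ℝ) ≤ (m : ℝ) ^ 2 := by
      have : (4 : ℤ) ≤ m ^ 2 := by rw [← sq_abs]; nlinarith
      exact_mod_cast this
    have hM : (m : ℝ) ^ 2 ≤ (l : ℝ) ^ 2 := by
      have : m ^ 2 ≤ (l : ℤ) ^ 2 := by rw [← sq_abs]; nlinarith
      exact_mod_cast this
    rw [Cpe_eq_brR, neg_mul, neg_nonpos]
    exact mul_nonneg (by positivity) (brR_nonneg hlR h4 hM)
  · have : (fun l : ℕ => Cpe l (-1)) = fun l : ℕ => Cpe l 1 := by
      funext l; simp [Cpe_eq_brR]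
    rw [this]; exact tendsto_one
end

section
/- Let f : ℝ² → ℝ be continuously differentiable and 2π-periodic in each variable, with zero mean: ∫_{[0,2π]²} f(x1,x2) dx1 dx2 = 0. Let I(x1,x2) = (2π − x1, π + x2). Suppose that (∂f/∂x1)(I(x)) = (∂f/∂x1)(x) and (∂f/∂x2)(I(x)) = −(∂f/∂x2)(x) for all x ∈ ℝ² (equivalently, the Hamiltonian vector field v_f = (∂₂f, −∂₁f) satisfies dI ∘ v_f = v_f ∘ I). Then f(I(x)) = −f(x) for all x ∈ ℝ². -/
/-- Partial derivative in the first variable. -/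
noncomputable def pd1 (f : ℝ × ℝ → ℝ) (x : ℝ × ℝ) : ℝ := fderiv ℝ f x (1, 0)

/-- Partial derivative in the second variable. -/
noncomputable def pd2 (f : ℝ × ℝ → ℝ) (x : ℝ × ℝ) : ℝ := fderiv ℝ f x (0, 1)

theorem invariant_field_antiinvariant_stream
    (f : ℝ × ℝ → ℝ) (hf : ContDiff ℝ 1 f)
    (hper : ∀ x : ℝ × ℝ, f (x.1 + 2 * Real.pi, x.2) = f x ∧ f (x.1, x.2 + 2 * Real.pi) = f x)
    (hmean : (∫ x in (0 : ℝ)..(2 * Real.pi), ∫ y in (0 : ℝ)..(2 * Real.pi), f (x, y)) = 0)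
    (h1 : ∀ x : ℝ × ℝ, pd1 f (2 * Real.pi - x.1, Real.pi + x.2) = pd1 f x)
    (h2 : ∀ x : ℝ × ℝ, pd2 f (2 * Real.pi - x.1, Real.pi + x.2) = -pd2 f x) :
    ∀ x : ℝ × ℝ, f (2 * Real.pi - x.1, Real.pi + x.2) = -f x := by
  have hd : Differentiable ℝ f := hf.differentiable (by norm_num)
  have hc : Continuous f := hf.continuous
  -- the sum `f ∘ I + f` has zero derivative
  have hI : ∀ x : ℝ × ℝ, HasFDerivAt (fun x : ℝ × ℝ => (2 * Real.pi - x.1, Real.pi + x.2))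
      ((-(ContinuousLinearMap.fst ℝ ℝ ℝ)).prod (ContinuousLinearMap.snd ℝ ℝ ℝ)) x := by
    intro x
    exact (hasFDerivAt_fst.const_sub _).prodMk (hasFDerivAt_snd.const_add _)
  have hg : ∀ x : ℝ × ℝ, HasFDerivAt
      (fun x : ℝ × ℝ => f (2 * Real.pi - x.1, Real.pi + x.2) + f x) (0 : ℝ × ℝ →L[ℝ] ℝ) x := by
    intro x
    have h := ((hd (2 * Real.pi - x.1, Real.pi + x.2)).hasFDerivAt.comp x (hI x)).add
      (hd x).hasFDerivAt
    refine h.congr_fderiv ?_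
    have e1 := h1 x
    have e2 := h2 x
    simp only [pd1, pd2] at e1 e2
    have e3 : fderiv ℝ f (2 * Real.pi - x.1, Real.pi + x.2) (-1, 0)
        = - fderiv ℝ f (2 * Real.pi - x.1, Real.pi + x.2) (1, 0) := by
      rw [← map_neg]; simp
    ext
    · simp [e3, e1]
    · simp [e2]
  have hconst : ∀ x y : ℝ × ℝ, f (2 * Real.pi - x.1, Real.pi + x.2) + f x
      = f (2 * Real.pi - y.1, Real.pi + y.2) + f y := by
    intro x y
    exact is_const_of_fderiv_eq_zero (𝕜 := ℝ) (fun z => (hg z).differentiableAt)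
      (fun z => (hg z).fderiv) x y
  obtain ⟨c, hcc⟩ : ∃ c, ∀ x : ℝ × ℝ, f (2 * Real.pi - x.1, Real.pi + x.2) = c - f x :=
    ⟨_, fun x => eq_sub_of_add_eq (hconst x 0)⟩
  have hGc : Continuous (fun x : ℝ => ∫ y in (0 : ℝ)..(2 * Real.pi), f (x, y)) :=
    intervalIntegral.continuous_parametric_intervalIntegral_of_continuous' (by exact hc) _ _
  have hshift : ∀ a : ℝ, (∫ y in (0 : ℝ)..(2 * Real.pi), f (a, Real.pi + y))
      = ∫ y in (0 : ℝ)..(2 * Real.pi), f (a, y) := by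
    intro a
    have hp : Function.Periodic (fun y => f (a, y)) (2 * Real.pi) := fun y => (hper (a, y)).2
    have := hp.intervalIntegral_add_eq Real.pi 0
    rw [intervalIntegral.integral_comp_add_left (fun y => f (a, y)) Real.pi]
    simpa using this
  have hG : ∀ x : ℝ, (∫ y in (0 : ℝ)..(2 * Real.pi), f (2 * Real.pi - x, y))
      = 2 * Real.pi * c - ∫ y in (0 : ℝ)..(2 * Real.pi), f (x, y) := by
    intro x
    rw [← hshift]
    have : ∀ y, f (2 * Real.pi - x, Real.pi + y) = c - f (x, y) := fun y => hcc (x, y)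
    simp only [this]
    rw [intervalIntegral.integral_sub (by simp)
      ((by fun_prop : Continuous fun y => f (x, y)).intervalIntegrable _ _)]
    simp
  have hfin : (∫ x in (0 : ℝ)..(2 * Real.pi), ∫ y in (0 : ℝ)..(2 * Real.pi),
      f (2 * Real.pi - x, y)) = 0 := by
    rw [intervalIntegral.integral_comp_sub_left
      (fun x => ∫ y in (0 : ℝ)..(2 * Real.pi), f (x, y))]
    simpa using hmean
  simp only [hG] at hfin
  rw [intervalIntegral.integral_sub (by simp) (hGc.intervalIntegrable _ _), hmean] at hfin
  have hc0 : c = 0 := by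
    simpa [Real.pi_ne_zero] using hfin
  intro x
  rw [hcc, hc0, zero_sub]
end
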